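/- arXiv:math/0504061 — 5 statements merged into one kernel-verified Lean document; each statement's English description precedes it below -/
import Mathlib

section
/- Let J = ⋃_{n=1}^∞ (1/(2n+1), 1/(2n)] ⊆ (0,1] and define F_ε : ℝ → ℝ by F_ε(x) = x for ε ∈ J and F_ε(x) = x − 1 for ε ∈ (0,1] \ J. Let x_ε = 0 for ε ∈ J and x_ε = 1 for ε ∈ (0,1] \ J. Then: (a) F_ε(x_ε) = 0 for all ε ∈ (0,1]; (b) the point net (x_ε) is compactly supported but not near-standard (it does not converge as ε → 0); (c) there is no near-standard point net (y_ε) in ℝ with F_ε(y_ε) → 0 as ε → 0. In particular, the solution set of the generalized equation F = 0 is nonempty but contains no near-standard point. -/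
/-! The points `1/(2k+2)` lie in `J` and the points `1/(2k+3)` do not, and both sequences tend to
`0⁺`. If `y_ε → p` and `F_ε(y_ε) → 0`, then along the first sequence `F_ε(y_ε) = y_ε`, so `p = 0`,
while along the second `F_ε(y_ε) = y_ε - 1`, so `p = 1`: a contradiction. Since
`F_ε(x_ε) = 0` identically, the divergence of `(x_ε)` is the special case `y = x`. -/

open Topology Filter Set

/-- `J = ⋃_{n=1}^∞ (1/(2n+1), 1/(2n)] ⊆ (0,1]`. -/
def Jset : Set ℝ := ⋃ n : ℕ, Set.Ioc (1 / (2 * (n + 1) + 1) : ℝ) (1 / (2 * (n + 1)))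

open Classical in
/-- `F_ε(x) = x` for `ε ∈ J`, `F_ε(x) = x - 1` otherwise. -/
noncomputable def Fnet (ε : ℝ) (x : ℝ) : ℝ := if ε ∈ Jset then x else x - 1

open Classical in
/-- `x_ε = 0` for `ε ∈ J`, `x_ε = 1` otherwise. -/
noncomputable def xnet (ε : ℝ) : ℝ := if ε ∈ Jset then 0 else 1

theorem even_mem_Jset (k : ℕ) : (1 / (2 * (k + 1)) : ℝ) ∈ Jset := by
  refine Set.mem_iUnion.2 ⟨k, ?_, le_rfl⟩
  apply one_div_lt_one_div_of_lt
  · positivity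
  · linarith

/-- An odd reciprocal in `J` would give a natural number with `2m + 2 ≤ 2k + 3 < 2m + 3`. -/
theorem odd_notMem_Jset (k : ℕ) : (1 / (2 * (k + 1) + 1) : ℝ) ∉ Jset := by
  intro h
  obtain ⟨m, h1, h2⟩ := Set.mem_iUnion.1 h
  have h1' := lt_of_one_div_lt_one_div (by positivity) h1
  have h2' := le_of_one_div_le_one_div (by positivity) h2
  have h3 : 2 * (k + 1) + 1 < 2 * (m + 1) + 1 := by exact_mod_cast h1'
  have h4 : 2 * (m + 1) ≤ 2 * (k + 1) + 1 := by exact_mod_cast h2'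
  omega

theorem tendsto_even :
    Tendsto (fun k : ℕ => (1 / (2 * (k + 1)) : ℝ)) atTop (𝓝[>] (0:ℝ)) := by
  refine tendsto_nhdsWithin_iff.2 ⟨?_, Eventually.of_forall fun k => ?_⟩
  · refine squeeze_zero (fun k => by positivity) (fun k => ?_)
      (tendsto_one_div_add_atTop_nhds_zero_nat (𝕜 := ℝ))
    exact one_div_le_one_div_of_le (by positivity) (by linarith [k.cast_nonneg (α := ℝ)])
  · show (0:ℝ) < _
    positivity

theorem tendsto_odd :
    Tendsto (fun k : ℕ => (1 / (2 * (k + 1) + 1) : ℝ)) atTop (𝓝[>] (0:ℝ)) := by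
  refine tendsto_nhdsWithin_iff.2 ⟨?_, Eventually.of_forall fun k => ?_⟩
  · refine squeeze_zero (fun k => by positivity) (fun k => ?_)
      (tendsto_one_div_add_atTop_nhds_zero_nat (𝕜 := ℝ))
    exact one_div_le_one_div_of_le (by positivity) (by linarith [k.cast_nonneg (α := ℝ)])
  · show (0:ℝ) < _
    positivity

theorem Fnet_xnet (ε : ℝ) : Fnet ε (xnet ε) = 0 := by
  by_cases h : ε ∈ Jset <;> simp [Fnet, xnet, h]

/-- A convergent net cannot solve `F = 0` asymptotically: its limit would be both `0` and `1`. -/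
theorem not_tendsto_Fnet {y : ℝ → ℝ} {p : ℝ} (hy : Tendsto y (𝓝[>] (0:ℝ)) (𝓝 p))
    (hF : Tendsto (fun ε => Fnet ε (y ε)) (𝓝[>] (0:ℝ)) (𝓝 0)) : False := by
  have h0 : p = 0 := by
    refine tendsto_nhds_unique (hy.comp tendsto_even) ((hF.comp tendsto_even).congr fun k => ?_)
    simp only [Function.comp, Fnet, if_pos (even_mem_Jset k)]
  have h1 : p - 1 = 0 := by
    refine tendsto_nhds_unique ((hy.comp tendsto_odd).sub_const 1)
      ((hF.comp tendsto_odd).congr fun k => ?_)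
    simp only [Function.comp, Fnet, if_neg (odd_notMem_Jset k)]
  linarith

/-- (a) `F_ε(x_ε) = 0` for all `ε ∈ (0,1]`; (b) the net `(x_ε)` is
compactly supported but not near-standard; (c) there is no near-standard compactly
supported point net `(y_ε)` with `F_ε(y_ε) → 0` as `ε → 0⁺`. -/
theorem stmt2 :
    (∀ ε ∈ Set.Ioc (0:ℝ) 1, Fnet ε (xnet ε) = 0) ∧
    ((∃ K : Set ℝ, IsCompact K ∧ ∃ ε₀ > (0:ℝ), ∀ ε : ℝ, 0 < ε → ε < ε₀ → xnet ε ∈ K) ∧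
      ¬ (∃ p : ℝ, Filter.Tendsto xnet (𝓝[>] (0:ℝ)) (𝓝 p))) ∧
    ¬ (∃ y : ℝ → ℝ,
        (∃ K : Set ℝ, IsCompact K ∧ ∃ ε₀ > (0:ℝ), ∀ ε : ℝ, 0 < ε → ε < ε₀ → y ε ∈ K) ∧
        (∃ p : ℝ, Filter.Tendsto y (𝓝[>] (0:ℝ)) (𝓝 p)) ∧
        Filter.Tendsto (fun ε => Fnet ε (y ε)) (𝓝[>] (0:ℝ)) (𝓝 0)) := by
  refine ⟨fun ε _ => Fnet_xnet ε, ⟨⟨{0, 1}, (Set.toFinite _).isCompact, 1, one_pos, ?_⟩, ?_⟩, ?_⟩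
  · intro ε _ _
    by_cases h : ε ∈ Jset <;> simp [xnet, h]
  · rintro ⟨p, hp⟩
    exact not_tendsto_Fnet hp (by simp only [Fnet_xnet]; exact tendsto_const_nhds)
  · rintro ⟨y, _, ⟨p, hp⟩, hF⟩
    exact not_tendsto_Fnet hp hF
end

section
/- For each ε ∈ (0,1] let ξ_ε be a smooth complete vector field on ℝ^m with flow Φ_ε : ℝ × ℝ^m → ℝ^m, and assume the net (Φ_ε) is c-bounded and moderate (as a net of smooth maps ℝ^{1+m} → ℝ^m). Let (F_ε) be a moderate net of smooth maps ℝ^m → ℝ^l. Suppose Φ is a symmetry of the equation F = 0, i.e.: for every compactly supported point net (x_ε) in ℝ^m with |F_ε(x_ε)| = O(ε^q) for all q ∈ ℕ, and every compactly supported net (η_ε) of reals, one has |F_ε(Φ_ε(η_ε, x_ε))| = O(ε^q) for all q ∈ ℕ. Then for every compactly supported point net (x_ε) with |F_ε(x_ε)| = O(ε^q) for all q ∈ ℕ one has |DF_ε(x_ε)·ξ_ε(x_ε)| = O(ε^q) for all q ∈ ℕ, i.e. ξ(F) vanishes on the solution set of F = 0. -/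
/-! Fix a solution net `x_ε` and a component `f` of `F_ε`. Along the integral curve
`γ t = Φ_ε (t, x_ε)` the function `g t = f (γ t)` has `g' 0 = Df(x_ε)·ξ_ε(x_ε)`, and Taylor's
formula with step `h` bounds `|g' 0|` by `(|g h| + |g 0|) / h + h · sup |g''|`. The symmetry
hypothesis, applied to the time net `h = ε ^ N`, makes `g h` as small as any power of
`ε`. If all data are bounded by `M = C / ε ^ p`, then `|g''| ≤ M ^ 3 + M ^ 2`, and `N = 3 p + q`
makes every term `O(ε ^ q)` (`abs_fderiv_le_of_integralCurve`, `norm_fderiv_flow_le`).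

The second derivative `g'' = D²f(ξ, ξ) + Df(Dξ·ξ)` involves `ξ` and `Dξ·ξ`, for which no growth
condition is assumed. They are the first and second time derivatives of the flow at time `0`, so
they are controlled by the moderateness of `Φ`, provided the Fréchet derivatives of `Φ` appearing
in `iteratedFDeriv` are genuine: nothing but differentiability in time is assumed of `Φ`, and
`fderiv` of a non-differentiable map is the junk value `0`. Hence the joint flow
must be shown to be differentiable near `(0, z)` and twice differentiable at `(0, z)`
(`flow_twice_differentiable`). The derivative of `Φ` in the initial value is the solution `J` of
the variational equation `J' = Dξ(Φ) ∘ J`, obtained from the Picard–Lindelöf theorem and identified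
by Grönwall's inequality; a map with one derivative in `z` and a continuous derivative in `t` is
jointly differentiable (`hasFDerivAt_uncurry_of_partials`), and this criterion is applied to `Φ`
and then to `J`. The c-boundedness of `Φ` keeps all orbits in a fixed ball, where `ξ_ε` and its
derivative are Lipschitz.
-/

open Topology Filter Set

/-- A net of smooth real-valued functions on a normed space is moderate: on each compact
set, every iterated derivative grows at most like some negative power of `ε`. -/
def ModerateF {E : Type*} [NormedAddCommGroup E] [NormedSpace ℝ E]
    (u : ℝ → E → ℝ) : Prop :=
  ∀ K : Set E, IsCompact K → ∀ k : ℕ, ∃ p : ℕ, ∃ C > (0:ℝ), ∃ ε₀ > (0:ℝ),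
    ∀ ε : ℝ, 0 < ε → ε < ε₀ → ∀ x ∈ K, ‖iteratedFDeriv ℝ k (u ε) x‖ ≤ C / ε ^ p

/-- A net of maps into `ℝ^l` is moderate if each component is moderate. -/
def ModerateV {E : Type*} [NormedAddCommGroup E] [NormedSpace ℝ E] {l : ℕ}
    (u : ℝ → E → (Fin l → ℝ)) : Prop :=
  ∀ i : Fin l, ModerateF (fun ε x => u ε x i)

/-- A net of maps is c-bounded: each compact set is mapped into a fixed compact set
for small `ε`. -/
def CBoundedMap {X Y : Type*} [TopologicalSpace X] [TopologicalSpace Y]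
    (u : ℝ → X → Y) : Prop :=
  ∀ K : Set X, IsCompact K → ∃ ε₀ > (0:ℝ), ∃ K' : Set Y, IsCompact K' ∧
    ∀ ε : ℝ, 0 < ε → ε < ε₀ → ∀ x ∈ K, u ε x ∈ K'

/-- A point net is compactly supported: it lies in a fixed compact set for small `ε`. -/
def CptSupNet {X : Type*} [TopologicalSpace X] (x : ℝ → X) : Prop :=
  ∃ K : Set X, IsCompact K ∧ ∃ ε₀ > (0:ℝ), ∀ ε : ℝ, 0 < ε → ε < ε₀ → x ε ∈ K

/-! ### Differentiable dependence of a flow on time and initial value -/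

/-- Joint differentiability from partial derivatives: differentiability in `z` is needed only at the
base point, whereas the time derivative must exist nearby and be continuous at the base point. -/
theorem hasFDerivAt_uncurry_of_partials {E G : Type*} [NormedAddCommGroup E] [NormedSpace ℝ E]
    [NormedAddCommGroup G] [NormedSpace ℝ G] {f : ℝ → E → G} {f' : ℝ × E → G} {t₀ : ℝ} {z₀ : E}
    {L : E →L[ℝ] G} (hz : HasFDerivAt (f t₀) L z₀)
    (ht : ∀ᶠ p : ℝ × E in 𝓝 (t₀, z₀), HasDerivAt (fun s => f s p.2) (f' p) p.1)
    (hc : ContinuousAt f' (t₀, z₀)) :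
    HasFDerivAt (fun p : ℝ × E => f p.1 p.2)
      ((ContinuousLinearMap.toSpanSingleton ℝ (f' (t₀, z₀))).coprod L) (t₀, z₀) := by
  have h1 : HasFDerivAt (fun p : ℝ × E => f t₀ p.2)
      (L.comp (ContinuousLinearMap.snd ℝ ℝ E)) (t₀, z₀) :=
    HasFDerivAt.comp (t₀, z₀) (g := f t₀) (f := fun p : ℝ × E => p.2) hz hasFDerivAt_snd
  have h2 : HasFDerivAt (fun p : ℝ × E => f p.1 p.2 - f t₀ p.2)
      ((ContinuousLinearMap.toSpanSingleton ℝ (f' (t₀, z₀))).comp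
        (ContinuousLinearMap.fst ℝ ℝ E)) (t₀, z₀) := by
    rw [hasFDerivAt_iff_isLittleO, Asymptotics.isLittleO_iff]
    intro c hc0
    have hev : ∀ᶠ p : ℝ × E in 𝓝 (t₀, z₀), HasDerivAt (fun s => f s p.2) (f' p) p.1 ∧
        ‖f' p - f' (t₀, z₀)‖ ≤ c := by
      refine ht.and ?_
      have := (hc.sub continuousAt_const).norm (f := fun p => f' p - f' (t₀, z₀))
      have h3 : Tendsto (fun p => ‖f' p - f' (t₀, z₀)‖) (𝓝 (t₀, z₀)) (𝓝 0) := by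
        simpa [ContinuousAt] using this
      exact h3.eventually (ge_mem_nhds hc0)
    obtain ⟨r, hr, hball⟩ := Metric.eventually_nhds_iff_ball.1 hev
    filter_upwards [Metric.ball_mem_nhds (t₀, z₀) hr] with p hp
    rw [← ball_prod_same] at hp hball
    have hmv := (convex_ball t₀ r).norm_image_sub_le_of_norm_hasDerivWithin_le
      (f := fun s => f s p.2 - s • f' (t₀, z₀)) (f' := fun s => f' (s, p.2) - f' (t₀, z₀))
      (C := c) (x := t₀) (y := p.1)
      (fun s hs => by
        have := (hball (s, p.2) ⟨hs, hp.2⟩).1.sub ((hasDerivAt_id s).smul_const (f' (t₀, z₀)))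
        exact (this.congr_deriv (by simp)).hasDerivWithinAt)
      (fun s hs => (hball (s, p.2) ⟨hs, hp.2⟩).2) (Metric.mem_ball_self hr) hp.1
    calc _ = ‖f p.1 p.2 - p.1 • f' (t₀, z₀) - (f t₀ p.2 - t₀ • f' (t₀, z₀))‖ := by
          congr 1
          simp [ContinuousLinearMap.toSpanSingleton_apply, sub_smul]
          abel
      _ ≤ c * ‖p.1 - t₀‖ := hmv
      _ ≤ c * ‖p - (t₀, z₀)‖ := by
          gcongr
          exact norm_fst_le (p - (t₀, z₀))
  have h3 := h2.add h1
  refine (h3.congr_of_eventuallyEq (Eventually.of_forall fun p => by simp)).congr_fderiv ?_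
  ext <;> simp

theorem HasDerivAt.comp_neg_arg {E : Type*} [NormedAddCommGroup E] [NormedSpace ℝ E]
    {γ : ℝ → E} {γ' : E} {s : ℝ} (h : HasDerivAt γ γ' (-s)) :
    HasDerivAt (fun r => γ (-r)) (-γ') s := by
  have := h.scomp s (hasDerivAt_neg s)
  rw [neg_one_smul] at this
  exact this

/-- Grönwall: two integral curves that stay in a set where the field is `K`-Lipschitz separate at
most exponentially. -/
theorem dist_integralCurves_le {E : Type*} [NormedAddCommGroup E] [NormedSpace ℝ E]
    {v : E → E} {B : Set E} {K : NNReal} (hv : LipschitzOnWith K v B) {γ γ' : ℝ → E} {T : ℝ}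
    (hT : 0 ≤ T) (hγ : ∀ t ∈ Icc 0 T, HasDerivAt γ (v (γ t)) t) (hγB : ∀ t ∈ Icc 0 T, γ t ∈ B)
    (hγ' : ∀ t ∈ Icc 0 T, HasDerivAt γ' (v (γ' t)) t) (hγB' : ∀ t ∈ Icc 0 T, γ' t ∈ B) :
    dist (γ T) (γ' T) ≤ dist (γ 0) (γ' 0) * Real.exp (K * T) := by
  have := dist_le_of_trajectories_ODE_of_mem (v := fun _ => v) (s := fun _ => B) (K := K)
    (f := γ) (g := γ') (a := 0) (b := T) (δ := dist (γ 0) (γ' 0)) (fun _ _ => hv)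
    (fun t ht => (hγ t ht).continuousAt.continuousWithinAt)
    (fun t ht => (hγ t (Ico_subset_Icc_self ht)).hasDerivWithinAt)
    (fun t ht => hγB t (Ico_subset_Icc_self ht))
    (fun t ht => (hγ' t ht).continuousAt.continuousWithinAt)
    (fun t ht => (hγ' t (Ico_subset_Icc_self ht)).hasDerivWithinAt)
    (fun t ht => hγB' t (Ico_subset_Icc_self ht)) le_rfl T ⟨hT, le_rfl⟩
  simpa using this

/-- A solution `J` of the variational equation along the orbit of `z₀` is the derivative of the
time-`T` map at `z₀`. The error `Φ t z - Φ t z₀ - J t (z - z₀)` satisfies a linear differential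
inequality whose inhomogeneity is `O(‖z - z₀‖ ^ 2)`, so Grönwall bounds it by
`O(‖z - z₀‖ ^ 2)`. -/
theorem hasFDerivAt_flow_of_nonneg {E : Type*} [NormedAddCommGroup E] [NormedSpace ℝ E]
    {v : E → E} {B U : Set E} {K M : NNReal} (hvd : Differentiable ℝ v) (hB : Convex ℝ B)
    (hvK : ∀ x ∈ B, ‖fderiv ℝ v x‖ ≤ K) (hvM : LipschitzOnWith M (fderiv ℝ v) B)
    {Φ : ℝ → E → E} {T : ℝ} (hT : 0 ≤ T) (h0 : ∀ z ∈ U, Φ 0 z = z)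
    (hΦ : ∀ z ∈ U, ∀ t ∈ Icc 0 T, HasDerivAt (fun s => Φ s z) (v (Φ t z)) t)
    (hΦB : ∀ z ∈ U, ∀ t ∈ Icc 0 T, Φ t z ∈ B) {z₀ : E} (hU : U ∈ 𝓝 z₀)
    {J : ℝ → E →L[ℝ] E} (hJ0 : J 0 = ContinuousLinearMap.id ℝ E)
    (hJ : ∀ t ∈ Icc 0 T, HasDerivAt J ((fderiv ℝ v (Φ t z₀)).comp (J t)) t) :
    HasFDerivAt (Φ T) (J T) z₀ := by
  have hz₀ : z₀ ∈ U := mem_of_mem_nhds hU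
  have hvL : LipschitzOnWith K v B :=
    hB.lipschitzOnWith_of_nnnorm_fderiv_le (fun x _ => hvd x) (fun x hx => hvK x hx)
  -- second-order Taylor estimate for `v` on the convex set `B`
  have htaylor : ∀ a ∈ B, ∀ b ∈ B, ‖v b - v a - fderiv ℝ v a (b - a)‖ ≤ M * ‖b - a‖ ^ 2 := by
    intro a ha b hb
    have hseg : segment ℝ a b ⊆ B := hB.segment_subset ha hb
    have := (convex_segment (𝕜 := ℝ) a b).norm_image_sub_le_of_norm_fderiv_le' (f := v)
      (φ := fderiv ℝ v a) (C := M * ‖b - a‖) (fun x _ => hvd x) (fun x hx => by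
        refine (hvM.norm_sub_le (hseg hx) ha).trans ?_
        gcongr
        exact norm_sub_le_of_mem_segment hx)
      (left_mem_segment ℝ a b) (right_mem_segment ℝ a b)
    calc _ ≤ _ := this
      _ = _ := by ring
  set D : ℝ := M * Real.exp (K * T) ^ 2 with hD
  have key : ∀ z ∈ U, ‖Φ T z - Φ T z₀ - J T (z - z₀)‖
      ≤ gronwallBound 0 K (D * ‖z - z₀‖ ^ 2) T := by
    intro z hz
    have hder : ∀ t ∈ Icc 0 T, HasDerivAt (fun t => Φ t z - Φ t z₀ - J t (z - z₀))
        (v (Φ t z) - v (Φ t z₀) - (fderiv ℝ v (Φ t z₀)) (J t (z - z₀))) t := by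
      intro t ht
      have h1 := (hJ t ht).clm_apply (hasDerivAt_const t (z - z₀))
      exact ((hΦ z hz t ht).sub (hΦ z₀ hz₀ t ht)).sub (by simpa using h1)
    have := norm_le_gronwallBound_of_norm_deriv_right_le (a := 0) (b := T) (δ := 0) (K := K)
      (ε := D * ‖z - z₀‖ ^ 2)
      (fun t ht => (hder t ht).continuousAt.continuousWithinAt)
      (fun t ht => (hder t (Ico_subset_Icc_self ht)).hasDerivWithinAt)
      (by simp [h0 z hz, h0 z₀ hz₀, hJ0]) (fun t ht' => ?_) T ⟨hT, le_rfl⟩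
    · simpa using this
    have ht := Ico_subset_Icc_self ht'
    have hlip : ‖Φ t z - Φ t z₀‖ ≤ ‖z - z₀‖ * Real.exp (K * T) := by
      have := dist_integralCurves_le hvL (γ := fun s => Φ s z) (γ' := fun s => Φ s z₀) ht.1
        (fun s hs => hΦ z hz s ⟨hs.1, hs.2.trans ht.2⟩)
        (fun s hs => hΦB z hz s ⟨hs.1, hs.2.trans ht.2⟩)
        (fun s hs => hΦ z₀ hz₀ s ⟨hs.1, hs.2.trans ht.2⟩)
        (fun s hs => hΦB z₀ hz₀ s ⟨hs.1, hs.2.trans ht.2⟩)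
      simp only [h0 z hz, h0 z₀ hz₀, dist_eq_norm] at this
      refine this.trans ?_
      gcongr
      exact ht.2
    have hsplit : v (Φ t z) - v (Φ t z₀) - (fderiv ℝ v (Φ t z₀)) (J t (z - z₀))
        = fderiv ℝ v (Φ t z₀) (Φ t z - Φ t z₀ - J t (z - z₀))
          + (v (Φ t z) - v (Φ t z₀) - fderiv ℝ v (Φ t z₀) (Φ t z - Φ t z₀)) := by
      simp only [map_sub]; abel
    rw [hsplit]
    refine (norm_add_le _ _).trans (add_le_add ?_ ?_)
    · exact ((fderiv ℝ v (Φ t z₀)).le_opNorm _).trans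
        (by gcongr; exact hvK _ (hΦB z₀ hz₀ t ht))
    · refine (htaylor _ (hΦB z₀ hz₀ t ht) _ (hΦB z hz t ht)).trans ?_
      calc (M : ℝ) * ‖Φ t z - Φ t z₀‖ ^ 2 ≤ M * (‖z - z₀‖ * Real.exp (K * T)) ^ 2 := by gcongr
        _ = D * ‖z - z₀‖ ^ 2 := by rw [hD]; ring
  -- the Grönwall bound is linear in the inhomogeneity, including the degenerate case `K = 0`
  obtain ⟨D', hD'⟩ : ∃ D' : ℝ, ∀ e : ℝ, gronwallBound 0 K e T = D' * e := by
    by_cases hK : (K : ℝ) = 0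
    · exact ⟨T, fun e => by rw [hK, gronwallBound_K0]; ring⟩
    · exact ⟨(Real.exp (K * T) - 1) / K, fun e => by
        rw [gronwallBound_of_K_ne_0 hK]; ring⟩
  rw [hasFDerivAt_iff_isLittleO]
  have hO : (fun z => Φ T z - Φ T z₀ - J T (z - z₀)) =O[𝓝 z₀] fun z => ‖z - z₀‖ ^ 2 := by
    refine Asymptotics.IsBigO.of_bound (D' * D) ?_
    filter_upwards [hU] with z hz
    refine (key z hz).trans (le_of_eq ?_)
    rw [hD', norm_pow, norm_norm]; ring
  refine hO.trans_isLittleO ?_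
  have hsm : (fun z => ‖z - z₀‖) =o[𝓝 z₀] fun _ => (1 : ℝ) := by
    rw [Asymptotics.isLittleO_one_iff]
    have : Continuous fun z : E => ‖z - z₀‖ := by fun_prop
    simpa using this.tendsto z₀
  have := hsm.mul_isBigO (Asymptotics.isBigO_refl (fun z => ‖z - z₀‖) (𝓝 z₀))
  refine (this.congr (fun z => by ring) (fun z => by ring)).trans_isBigO ?_
  simpa using Asymptotics.isBigO_refl (fun z => z - z₀) (𝓝 z₀)

/-- The previous statement for times of either sign; negative times are reduced to positive ones by
reversing the vector field. -/
theorem hasFDerivAt_flow {E : Type*} [NormedAddCommGroup E] [NormedSpace ℝ E]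
    {v : E → E} {B U : Set E} {K M : NNReal} (hvd : Differentiable ℝ v) (hB : Convex ℝ B)
    (hvK : ∀ x ∈ B, ‖fderiv ℝ v x‖ ≤ K) (hvM : LipschitzOnWith M (fderiv ℝ v) B)
    {Φ : ℝ → E → E} (h0 : ∀ z ∈ U, Φ 0 z = z)
    (hΦ : ∀ z ∈ U, ∀ t, HasDerivAt (fun s => Φ s z) (v (Φ t z)) t) {t : ℝ}
    (hΦB : ∀ z ∈ U, ∀ s, |s| ≤ |t| → Φ s z ∈ B) {z₀ : E} (hU : U ∈ 𝓝 z₀)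
    {J : ℝ → E →L[ℝ] E} (hJ0 : J 0 = ContinuousLinearMap.id ℝ E)
    (hJ : ∀ s, |s| ≤ |t| → HasDerivAt J ((fderiv ℝ v (Φ s z₀)).comp (J s)) s) :
    HasFDerivAt (Φ t) (J t) z₀ := by
  rcases le_total 0 t with ht | ht
  · have habs : ∀ s ∈ Icc 0 t, |s| ≤ |t| := fun s hs => by
      rw [abs_of_nonneg hs.1, abs_of_nonneg ht]; exact hs.2
    exact hasFDerivAt_flow_of_nonneg hvd hB hvK hvM ht h0 (fun z hz s _ => hΦ z hz s)
      (fun z hz s hs => hΦB z hz s (habs s hs)) hU hJ0 (fun s hs => hJ s (habs s hs))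
  · have habs : ∀ s ∈ Icc 0 (-t), |-s| ≤ |t| := fun s hs => by
      rw [abs_neg, abs_of_nonneg hs.1, abs_of_nonpos ht]; exact hs.2
    have hfd : ∀ x, fderiv ℝ (fun y => -v y) x = -fderiv ℝ v x := fun x => fderiv_fun_neg
    have := hasFDerivAt_flow_of_nonneg (v := fun y => -v y) (K := K) (M := M) (B := B) (U := U)
      (Φ := fun s => Φ (-s)) (J := fun s => J (-s)) (T := -t) (z₀ := z₀) hvd.neg hB
      (fun x hx => by rw [hfd, norm_neg]; exact hvK x hx)
      (by
        refine LipschitzOnWith.of_dist_le_mul fun x hx y hy => ?_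
        rw [hfd, hfd, dist_neg_neg]
        exact hvM.dist_le_mul x hx y hy)
      (by linarith) (fun z hz => by simpa using h0 z hz)
      (fun z hz s _ => by
        exact (hΦ z hz (-s)).comp_neg_arg)
      (fun z hz s hs => hΦB z hz _ (habs s hs)) hU (by simpa using hJ0)
      (fun s hs => by
        refine (hJ (-s) (habs s hs)).comp_neg_arg.congr_deriv ?_
        rw [hfd]; ext; simp)
    simpa using this

/-- The flow of a `C²` vector field whose orbits stay in a ball up to time `1` is jointly
differentiable near `(0, z₀)`, and its derivative is differentiable at `(0, z₀)`.
Only time `0` matters for the second derivative: there `J z 0 = id` for every `z`, so the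
`z`-derivative of `J` at that time is simply `0` and no second variational equation is needed. -/
theorem flow_twice_differentiable {E : Type*} [NormedAddCommGroup E] [NormedSpace ℝ E]
    [ProperSpace E] {v : E → E} (hv : ContDiff ℝ 2 v) {Φ : ℝ → E → E} (h0 : ∀ z, Φ 0 z = z)
    (hΦ : ∀ z t, HasDerivAt (fun s => Φ s z) (v (Φ t z)) t) {U : Set E} (hU : IsOpen U) {R : ℝ}
    (hΦB : ∀ z ∈ U, ∀ t, |t| ≤ 1 → Φ t z ∈ Metric.closedBall (0 : E) R) {z₀ : E} (hz₀ : z₀ ∈ U) :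
    (∀ᶠ p in 𝓝 ((0 : ℝ), z₀), DifferentiableAt ℝ (fun p : ℝ × E => Φ p.1 p.2) p) ∧
      DifferentiableAt ℝ (fderiv ℝ (fun p : ℝ × E => Φ p.1 p.2)) (0, z₀) := by
  set B := Metric.closedBall (0 : E) R
  have hB : Convex ℝ B := convex_closedBall 0 R
  have hBc : IsCompact B := isCompact_closedBall 0 R
  have hvd : Differentiable ℝ v := hv.differentiable (by norm_num)
  have hdv : ContDiff ℝ 1 (fderiv ℝ v) := hv.fderiv_right (by norm_num)
  obtain ⟨K, hK0, hvK⟩ : ∃ K : NNReal, 0 < K ∧ ∀ x ∈ B, ‖fderiv ℝ v x‖ ≤ K := by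
    obtain ⟨C, hC⟩ := hBc.exists_bound_of_continuousOn hdv.continuous.continuousOn
    exact ⟨(max C 1).toNNReal, Real.toNNReal_pos.2 (lt_max_of_lt_right one_pos),
      fun x hx => ((hC x hx).trans (le_max_left _ _)).trans (Real.le_coe_toNNReal _)⟩
  obtain ⟨M, hvM⟩ : ∃ M : NNReal, LipschitzOnWith M (fderiv ℝ v) B := by
    obtain ⟨C, hC⟩ := hBc.exists_bound_of_continuousOn
      (hdv.continuous_fderiv (by norm_num)).continuousOn
    exact ⟨C.toNNReal, hB.lipschitzOnWith_of_nnnorm_fderiv_le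
      (fun x _ => hdv.differentiable (by norm_num) x)
      (fun x hx => (hC x hx).trans (Real.le_coe_toNNReal _))⟩
  have hvL : LipschitzOnWith K v B :=
    hB.lipschitzOnWith_of_nnnorm_fderiv_le (fun x _ => hvd x) (fun x hx => hvK x hx)
  -- the variational equation is solvable on a time interval that does not depend on `z`
  set T : ℝ := min 1 (1 / (2 * K)) with hTdef
  have hK0' : (0 : ℝ) < K := hK0
  have hT0 : 0 < T := lt_min one_pos (by positivity)
  have hT1 : T ≤ 1 := min_le_left _ _
  have hKT : 2 * K * T ≤ 1 := by
    calc 2 * K * T ≤ 2 * K * (1 / (2 * K)) := by gcongr; exact min_le_right _ _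
      _ = 1 := by field_simp
  have hJex : ∀ z : E, ∃ J : ℝ → E →L[ℝ] E, z ∈ U → J 0 = ContinuousLinearMap.id ℝ E ∧
      ∀ t ∈ Ioo (-T) T, HasDerivAt J ((fderiv ℝ v (Φ t z)).comp (J t)) t := by
    intro z
    by_cases hz : z ∈ U
    swap
    · exact ⟨0, fun h => absurd h hz⟩
    have hnorm : ∀ t ∈ Icc (-T) T, ‖fderiv ℝ v (Φ t z)‖ ≤ K := fun t ht =>
      hvK _ (hΦB z hz t ((abs_le.2 ht).trans hT1))
    have hPL : IsPicardLindelof (fun t (X : E →L[ℝ] E) => (fderiv ℝ v (Φ t z)).comp X)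
        (tmin := -T) (tmax := T) ⟨0, by constructor <;> linarith⟩
        (ContinuousLinearMap.id ℝ E) 1 0 (2 * K) K := by
      refine ⟨fun t ht => ?_, fun X _ => ?_, fun t ht X hX => ?_, ?_⟩
      · refine LipschitzOnWith.of_dist_le_mul fun X _ Y _ => ?_
        rw [dist_eq_norm, dist_eq_norm, ← ContinuousLinearMap.comp_sub]
        exact (ContinuousLinearMap.opNorm_comp_le _ _).trans (by gcongr; exact hnorm t ht)
      · have hΦc : Continuous fun t => Φ t z :=
          continuous_iff_continuousAt.2 fun t => (hΦ z t).continuousAt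
        exact ((hdv.continuous.comp hΦc).clm_comp continuous_const).continuousOn
      · have hX2 : ‖X‖ ≤ 2 := by
          have h1 : ‖X - ContinuousLinearMap.id ℝ E‖ ≤ 1 := by
            simpa [dist_eq_norm] using hX
          calc ‖X‖ ≤ ‖X - ContinuousLinearMap.id ℝ E‖ + ‖ContinuousLinearMap.id ℝ E‖ :=
                norm_le_norm_sub_add _ _
            _ ≤ 1 + 1 := add_le_add h1 ContinuousLinearMap.norm_id_le
            _ = 2 := by norm_num
        calc _ ≤ ‖fderiv ℝ v (Φ t z)‖ * ‖X‖ := ContinuousLinearMap.opNorm_comp_le _ _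
          _ ≤ K * 2 := by gcongr; exact hnorm t ht
          _ = ((2 * K : NNReal) : ℝ) := by push_cast; ring
      · simpa using hKT
    obtain ⟨J, hJ0, hJ⟩ := hPL.exists_eq_forall_mem_Icc_hasDerivWithinAt₀
    exact ⟨J, fun _ => ⟨hJ0, fun t ht =>
      (hJ t (Ioo_subset_Icc_self ht)).hasDerivAt (Icc_mem_nhds ht.1 ht.2)⟩⟩
  choose J hJ using hJex
  have hpart : ∀ z ∈ U, ∀ t ∈ Ioo (-T) T, HasFDerivAt (Φ t) (J z t) z := by
    intro z hz t ht
    have ht' : |t| < T := abs_lt.2 ht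
    exact hasFDerivAt_flow hvd hB hvK hvM (fun z _ => h0 z) (fun z _ => hΦ z)
      (fun z hz s hs => hΦB z hz s (by linarith)) (hU.mem_nhds hz) (hJ z hz).1
      (fun s hs => (hJ z hz).2 s (abs_lt.1 (hs.trans_lt ht')))
  have hlip : ∀ t, |t| ≤ 1 → LipschitzOnWith (.mk (Real.exp K) (Real.exp_pos _).le) (Φ t) U := by
    intro t ht
    refine LipschitzOnWith.of_dist_le_mul fun x hx y hy => ?_
    have hexp : dist (Φ t x) (Φ t y) ≤ dist x y * Real.exp (K * |t|) := by
      rcases le_total 0 t with h | h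
      · have := dist_integralCurves_le hvL (γ := fun s => Φ s x) (γ' := fun s => Φ s y) h
          (fun s _ => hΦ x s) (fun s hs => hΦB x hx s (by
            rw [abs_of_nonneg hs.1]; rw [abs_of_nonneg h] at ht; exact hs.2.trans ht))
          (fun s _ => hΦ y s) (fun s hs => hΦB y hy s (by
            rw [abs_of_nonneg hs.1]; rw [abs_of_nonneg h] at ht; exact hs.2.trans ht))
        simpa [h0, abs_of_nonneg h] using this
      · have hvL' : LipschitzOnWith K (fun y => -v y) B := by
          refine LipschitzOnWith.of_dist_le_mul fun x hx y hy => ?_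
          rw [dist_neg_neg]
          exact hvL.dist_le_mul x hx y hy
        have := dist_integralCurves_le hvL' (γ := fun s => Φ (-s) x) (γ' := fun s => Φ (-s) y)
          (T := -t) (by linarith)
          (fun s _ => (hΦ x (-s)).comp_neg_arg)
          (fun s hs => hΦB x hx _ (by
            rw [abs_neg, abs_of_nonneg hs.1]; rw [abs_of_nonpos h] at ht; exact hs.2.trans ht))
          (fun s _ => (hΦ y (-s)).comp_neg_arg)
          (fun s hs => hΦB y hy _ (by
            rw [abs_neg, abs_of_nonneg hs.1]; rw [abs_of_nonpos h] at ht; exact hs.2.trans ht))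
        simpa [h0, abs_of_nonpos h] using this
    calc _ ≤ dist x y * Real.exp (K * |t|) := hexp
      _ ≤ dist x y * Real.exp K := by
          gcongr
          nlinarith
      _ = _ := mul_comm _ _
  have hJle : ∀ z ∈ U, ∀ t ∈ Ioo (-T) T, ‖J z t‖ ≤ Real.exp K := by
    intro z hz t ht
    exact (hpart z hz t ht).le_of_lipschitzOn (hU.mem_nhds hz)
      (hlip t ((abs_lt.2 ht).le.trans hT1))
  set W : Set (ℝ × E) := Ioo (-T) T ×ˢ U with hW
  have hWo : IsOpen W := isOpen_Ioo.prod hU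
  have hΦc : ∀ p ∈ W, ContinuousAt (fun p : ℝ × E => Φ p.1 p.2) p := by
    intro p hp
    have : ContinuousOn (fun p : ℝ × E => Φ p.1 p.2) W :=
      continuousOn_prod_of_continuousOn_lipschitzOnWith' _ _
        (fun t ht => hlip t ((abs_lt.2 ht).le.trans hT1))
        (fun z hz => (continuous_iff_continuousAt.2
          fun t => (hΦ z t).continuousAt).continuousOn)
    exact this.continuousAt (hWo.mem_nhds hp)
  have hder : ∀ p ∈ W, HasFDerivAt (fun p : ℝ × E => Φ p.1 p.2)
      ((ContinuousLinearMap.toSpanSingleton ℝ (v (Φ p.1 p.2))).coprod (J p.2 p.1)) p := by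
    rintro ⟨t, z⟩ ⟨ht, hz⟩
    exact hasFDerivAt_uncurry_of_partials (f' := fun p => v (Φ p.1 p.2)) (hpart z hz t ht)
      (Eventually.of_forall fun p => hΦ p.2 p.1)
      (hv.continuous.continuousAt.comp (hΦc (t, z) ⟨ht, hz⟩))
  have hp₀ : ((0 : ℝ), z₀) ∈ W := ⟨⟨by simpa using hT0, hT0⟩, hz₀⟩
  have hev : ∀ᶠ p in 𝓝 ((0 : ℝ), z₀), p ∈ W := hWo.mem_nhds hp₀
  refine ⟨hev.mono fun p hp => (hder p hp).differentiableAt, ?_⟩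
  have hJd : DifferentiableAt ℝ (fun p : ℝ × E => J p.2 p.1) (0, z₀) := by
    have hJ1 : ∀ z ∈ U, ∀ t ∈ Ioo (-T) T,
        ‖J z t - ContinuousLinearMap.id ℝ E‖ ≤ K * Real.exp K * ‖t‖ := by
      intro z hz t ht
      have := (convex_Ioo (-T) T).norm_image_sub_le_of_norm_hasDerivWithin_le (f := J z)
        (C := K * Real.exp K) (x := 0) (y := t)
        (fun s hs => ((hJ z hz).2 s hs).hasDerivWithinAt)
        (fun s hs => (ContinuousLinearMap.opNorm_comp_le _ _).trans (by
          gcongr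
          · exact hvK _ (hΦB z hz s ((abs_lt.2 hs).le.trans hT1))
          · exact hJle z hz s hs)) hp₀.1 ht
      simpa [(hJ z hz).1] using this
    have hJc : ContinuousAt (fun p : ℝ × E => J p.2 p.1) (0, z₀) := by
      rw [ContinuousAt, (hJ z₀ hz₀).1, tendsto_iff_norm_sub_tendsto_zero]
      have hlim : Tendsto (fun p : ℝ × E => K * Real.exp K * ‖p.1‖) (𝓝 (0, z₀)) (𝓝 0) := by
        have : Continuous fun p : ℝ × E => K * Real.exp K * ‖p.1‖ := by fun_prop
        simpa using this.tendsto ((0 : ℝ), z₀)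
      refine squeeze_zero' (Eventually.of_forall fun _ => norm_nonneg _) ?_ hlim
      exact hev.mono fun p hp => hJ1 p.2 hp.2 p.1 hp.1
    -- `J z 0 = id` does not depend on `z`, hence the partial derivative `L := 0`
    refine (hasFDerivAt_uncurry_of_partials (f := fun t z => J z t) (L := 0)
      (f' := fun p => (fderiv ℝ v (Φ p.1 p.2)).comp (J p.2 p.1)) ?_
      (hev.mono fun p hp => (hJ p.2 hp.2).2 p.1 hp.1) ?_).differentiableAt
    · refine (hasFDerivAt_const (ContinuousLinearMap.id ℝ E) z₀).congr_of_eventuallyEq ?_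
      filter_upwards [hU.mem_nhds hz₀] with z hz using (hJ z hz).1
    · exact (hdv.continuous.continuousAt.comp (hΦc _ hp₀)).clm_comp hJc
  have hvΦ : DifferentiableAt ℝ (fun p : ℝ × E => v (Φ p.1 p.2)) (0, z₀) :=
    (hvd _).comp _ (hder _ hp₀).differentiableAt
  have heq : fderiv ℝ (fun p : ℝ × E => Φ p.1 p.2) =ᶠ[𝓝 (0, z₀)] fun p =>
      (ContinuousLinearMap.toSpanSingleton ℝ (v (Φ p.1 p.2))).comp
        (ContinuousLinearMap.fst ℝ ℝ E) + (J p.2 p.1).comp (ContinuousLinearMap.snd ℝ ℝ E) :=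
    hev.mono fun p hp => by
      rw [(hder p hp).fderiv]; ext <;> simp
  refine DifferentiableAt.congr_of_eventuallyEq ?_ heq
  have hspan : DifferentiableAt ℝ
      (fun p : ℝ × E => ContinuousLinearMap.toSpanSingleton ℝ (v (Φ p.1 p.2))) (0, z₀) :=
    (ContinuousLinearMap.toSpanSingletonCLE (𝕜 := ℝ) (E := E)).differentiableAt.comp _ hvΦ
  exact (hspan.clm_comp (differentiableAt_const _)).add
    (hJd.clm_comp (differentiableAt_const _))

/-! ### Bounds on the vector field from derivatives of the flow -/

theorem fderiv_along_vertical_line {E G : Type*} [NormedAddCommGroup E] [NormedSpace ℝ E]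
    [NormedAddCommGroup G] [NormedSpace ℝ G] {φ : ℝ × E → G} {t : ℝ} {z : E}
    (hφ : DifferentiableAt ℝ φ (t, z)) :
    HasDerivAt (fun s : ℝ => φ (s, z)) (fderiv ℝ φ (t, z) (1, 0)) t :=
  hφ.hasFDerivAt.comp_hasDerivAt t ((hasDerivAt_id t).prodMk (hasDerivAt_const t z))

/-- Since `∂ₜΦ (0, z) = v z` and `∂ₜ²Φ (0, z) = Dv(z)·v(z)`, bounds on the first two derivatives of
the flow at time `0` bound `v` and `Dv·v`. -/
theorem flow_component_bounds {m : ℕ} {v : (Fin m → ℝ) → (Fin m → ℝ)} (hv : ContDiff ℝ 2 v)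
    {Φ : ℝ × (Fin m → ℝ) → (Fin m → ℝ)} (h0 : ∀ z, Φ (0, z) = z)
    (hΦ : ∀ t z, HasDerivAt (fun s => Φ (s, z)) (v (Φ (t, z))) t)
    {U : Set (Fin m → ℝ)} (hU : IsOpen U) {R : ℝ}
    (hΦB : ∀ z ∈ U, ∀ t, |t| ≤ 1 → Φ (t, z) ∈ Metric.closedBall 0 R) {z : Fin m → ℝ}
    (hz : z ∈ U) (i : Fin m) :
    |v z i| ≤ ‖iteratedFDeriv ℝ 1 (fun p => Φ p i) (0, z)‖ ∧
      |fderiv ℝ v z (v z) i| ≤ ‖iteratedFDeriv ℝ 2 (fun p => Φ p i) (0, z)‖ := by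
  obtain ⟨hd1, hd2⟩ := flow_twice_differentiable hv (Φ := fun t z => Φ (t, z)) h0
    (fun z t => hΦ t z) hU hΦB hz
  change ∀ᶠ p in 𝓝 ((0 : ℝ), z), DifferentiableAt ℝ Φ p at hd1
  change DifferentiableAt ℝ (fderiv ℝ Φ) (0, z) at hd2
  set φ : ℝ × (Fin m → ℝ) → ℝ := fun p => Φ p i with hφ
  set P : (Fin m → ℝ) →L[ℝ] ℝ := ContinuousLinearMap.proj i
  have hfd : ∀ p, DifferentiableAt ℝ Φ p → fderiv ℝ φ p = P.comp (fderiv ℝ Φ p) := fun p hp =>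
    (P.hasFDerivAt.comp p hp.hasFDerivAt).fderiv
  have hd2' : DifferentiableAt ℝ (fderiv ℝ φ) (0, z) := by
    refine DifferentiableAt.congr_of_eventuallyEq ?_ (hd1.mono hfd)
    exact (differentiableAt_const P).clm_comp hd2
  have hline : ∀ t : ℝ, HasDerivAt (fun s : ℝ => (s, z)) ((1 : ℝ), (0 : Fin m → ℝ)) t := fun t =>
    (hasDerivAt_id t).prodMk (hasDerivAt_const t z)
  have hcurve : ∀ p : ℝ × (Fin m → ℝ), p.2 = z → DifferentiableAt ℝ Φ p →
      fderiv ℝ φ p (1, 0) = v (Φ p) i := by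
    rintro ⟨t, _⟩ rfl hp
    rw [hfd _ hp]
    have h1 := fderiv_along_vertical_line hp
    exact congrFun (h1.unique (hΦ t _)) i
  have hnorm : ‖((1 : ℝ), (0 : Fin m → ℝ))‖ = 1 := by simp [Prod.norm_def]
  constructor
  · have h1 := hcurve (0, z) rfl hd1.self_of_nhds
    rw [h0] at h1
    rw [norm_iteratedFDeriv_one, ← h1, ← Real.norm_eq_abs]
    simpa [hnorm] using (fderiv ℝ φ (0, z)).le_opNorm (1, 0)
  · have hA : HasDerivAt (fun t : ℝ => fderiv ℝ φ (t, z) (1, 0))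
        (fderiv ℝ (fderiv ℝ φ) (0, z) (1, 0) (1, 0)) 0 := by
      have h1 := (fderiv_along_vertical_line hd2').clm_apply
        (hasDerivAt_const (0 : ℝ) ((1 : ℝ), (0 : Fin m → ℝ)))
      rw [map_zero, add_zero] at h1
      exact h1
    have hB : HasDerivAt (fun t : ℝ => v (Φ (t, z)) i) (fderiv ℝ v z (v z) i) 0 := by
      have h2 := hΦ 0 z
      rw [h0] at h2
      have hvz : HasFDerivAt v (fderiv ℝ v z) (Φ (0, z)) := by
        rw [h0]; exact (hv.differentiable (by norm_num) z).hasFDerivAt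
      have h1 := hvz.comp_hasDerivAt 0 h2
      exact hasDerivAt_pi.1 h1 i
    have heq : (fun t : ℝ => fderiv ℝ φ (t, z) (1, 0)) =ᶠ[𝓝 0] fun t => v (Φ (t, z)) i := by
      have : Tendsto (fun t : ℝ => (t, z)) (𝓝 0) (𝓝 (0, z)) := (hline 0).continuousAt
      exact (this.eventually hd1).mono fun t ht => hcurve (t, z) rfl ht
    rw [← (hA.congr_of_eventuallyEq heq.symm).unique hB, ← norm_iteratedFDeriv_fderiv,
      norm_iteratedFDeriv_one, ← Real.norm_eq_abs]
    have h1 := (fderiv ℝ (fderiv ℝ φ) (0, z) (1, 0)).le_opNorm (1, 0)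
    have h2 := (fderiv ℝ (fderiv ℝ φ) (0, z)).le_opNorm (1, 0)
    rw [hnorm, mul_one] at h1 h2
    exact h1.trans h2

/-! ### Taylor expansion along an integral curve -/

/-- First-order Taylor formula for `f ∘ γ` with step `h`: its derivative at `0` is a difference
quotient up to `h` times a bound for the second derivative
`D²f(v, v) + Df(Dv·v)` along the curve. -/
theorem abs_fderiv_le_of_integralCurve {E : Type*} [NormedAddCommGroup E] [NormedSpace ℝ E]
    {f : E → ℝ} (hf : ContDiff ℝ 2 f) {v : E → E} (hv : Differentiable ℝ v) {γ : ℝ → E}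
    (hγ : ∀ t, HasDerivAt γ (v (γ t)) t) {M : ℝ}
    (hf1 : ∀ s ∈ Icc (0 : ℝ) 1, ‖fderiv ℝ f (γ s)‖ ≤ M)
    (hf2 : ∀ s ∈ Icc (0 : ℝ) 1, ‖fderiv ℝ (fderiv ℝ f) (γ s)‖ ≤ M)
    (hv1 : ∀ s ∈ Icc (0 : ℝ) 1, ‖v (γ s)‖ ≤ M)
    (hv2 : ∀ s ∈ Icc (0 : ℝ) 1, ‖fderiv ℝ v (γ s) (v (γ s))‖ ≤ M) {h : ℝ} (h0 : 0 < h)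
    (h1 : h ≤ 1) :
    |fderiv ℝ f (γ 0) (v (γ 0))| ≤ (|f (γ h)| + |f (γ 0)|) / h + (M ^ 3 + M ^ 2) * h := by
  have hM : 0 ≤ M := (norm_nonneg _).trans (hv1 0 ⟨le_rfl, zero_le_one⟩)
  have hfd : Differentiable ℝ f := hf.differentiable (by norm_num)
  have hfd2 : Differentiable ℝ (fderiv ℝ f) :=
    (hf.fderiv_right (m := 1) (by norm_num)).differentiable (by norm_num)
  have hg : ∀ s, HasDerivAt (fun s => f (γ s)) (fderiv ℝ f (γ s) (v (γ s))) s := fun s =>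
    (hfd (γ s)).hasFDerivAt.comp_hasDerivAt s (hγ s)
  have hg' : ∀ s, HasDerivAt (fun s => fderiv ℝ f (γ s) (v (γ s)))
      (fderiv ℝ (fderiv ℝ f) (γ s) (v (γ s)) (v (γ s))
        + fderiv ℝ f (γ s) (fderiv ℝ v (γ s) (v (γ s)))) s := fun s =>
    ((hfd2 (γ s)).hasFDerivAt.comp_hasDerivAt s (hγ s)).clm_apply
      ((hv (γ s)).hasFDerivAt.comp_hasDerivAt s (hγ s))
  have hb : ∀ s ∈ Icc (0 : ℝ) 1, ‖fderiv ℝ (fderiv ℝ f) (γ s) (v (γ s)) (v (γ s))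
        + fderiv ℝ f (γ s) (fderiv ℝ v (γ s) (v (γ s)))‖ ≤ M ^ 3 + M ^ 2 := by
    intro s hs
    have e1 : ‖fderiv ℝ (fderiv ℝ f) (γ s) (v (γ s)) (v (γ s))‖ ≤ M * M * M :=
      ContinuousLinearMap.le_of_opNorm_le_of_le _
        (ContinuousLinearMap.le_of_opNorm_le_of_le _ (hf2 s hs) (hv1 s hs)) (hv1 s hs)
    have e2 : ‖fderiv ℝ f (γ s) (fderiv ℝ v (γ s) (v (γ s)))‖ ≤ M * M :=
      ContinuousLinearMap.le_of_opNorm_le_of_le _ (hf1 s hs) (hv2 s hs)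
    refine (norm_add_le _ _).trans ((add_le_add e1 e2).trans (le_of_eq (by ring)))
  have hsub : ∀ s ∈ Icc (0 : ℝ) h, s ∈ Icc (0 : ℝ) 1 := fun s hs => ⟨hs.1, hs.2.trans h1⟩
  set d := fderiv ℝ f (γ 0) (v (γ 0)) with hd
  have hg'b : ∀ s ∈ Icc (0 : ℝ) h, ‖fderiv ℝ f (γ s) (v (γ s)) - d‖ ≤ (M ^ 3 + M ^ 2) * h := by
    intro s hs
    have := norm_image_sub_le_of_norm_deriv_le_segment' (a := 0) (b := h)
      (fun x _ => (hg' x).hasDerivWithinAt)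
      (fun x hx => hb x (hsub x (Ico_subset_Icc_self hx))) s hs
    refine this.trans ?_
    rw [sub_zero]
    gcongr
    exact hs.2
  -- subtracting the linear part leaves a function with derivative at most `(M ^ 3 + M ^ 2) * h`
  have hmain := norm_image_sub_le_of_norm_deriv_le_segment' (a := 0) (b := h)
    (f := fun s => f (γ s) - s * d) (C := (M ^ 3 + M ^ 2) * h)
    (fun x _ => by
      have := (hg x).sub ((hasDerivAt_id x).mul_const d)
      exact (this.congr_deriv (by rw [one_mul])).hasDerivWithinAt)
    (fun x hx => hg'b x (Ico_subset_Icc_self hx)) h ⟨h0.le, le_rfl⟩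
  rw [Real.norm_eq_abs] at hmain
  have hhd : h * |d| ≤ |f (γ h)| + |f (γ 0)| + (M ^ 3 + M ^ 2) * h * h := by
    rw [← abs_of_pos h0, ← abs_mul, abs_of_pos h0]
    have e : h * d = f (γ h) - f (γ 0) - (f (γ h) - h * d - (f (γ 0) - 0 * d)) := by ring
    rw [e]
    refine (abs_sub _ _).trans (add_le_add (abs_sub _ _) ?_)
    simpa using hmain
  rw [← mul_le_mul_iff_right₀ h0]
  refine hhd.trans (le_of_eq ?_)
  field_simp

/-! ### Moderate and c-bounded nets -/

/-- Quantification over all sufficiently small `ε > 0`, expressed through a filter. -/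
theorem exists_pos_forall_lt_iff {P : ℝ → Prop} :
    (∃ ε₀ > (0 : ℝ), ∀ ε : ℝ, 0 < ε → ε < ε₀ → P ε) ↔ ∀ᶠ ε in 𝓝[>] (0 : ℝ), P ε := by
  rw [Filter.Eventually, mem_nhdsGT_iff_exists_Ioo_subset]
  exact ⟨fun ⟨a, ha, h⟩ => ⟨a, ha, fun x hx => h x hx.1 hx.2⟩,
    fun ⟨a, ha, h⟩ => ⟨a, ha, fun x h1 h2 => h ⟨h1, h2⟩⟩⟩

theorem eventually_small : ∀ᶠ ε in 𝓝[>] (0 : ℝ), ε ∈ Ioc (0 : ℝ) 1 := by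
  rw [← exists_pos_forall_lt_iff]
  exact ⟨1, one_pos, fun ε h1 h2 => ⟨h1, h2.le⟩⟩

/-- The moderateness constants can be chosen independently of the component. -/
theorem ModerateV.exists_uniform {E : Type*} [NormedAddCommGroup E] [NormedSpace ℝ E] {l : ℕ}
    {u : ℝ → E → (Fin l → ℝ)} (hu : ModerateV u) {K : Set E} (hK : IsCompact K) (k : ℕ) :
    ∃ p : ℕ, ∃ C ≥ (0 : ℝ), ∀ᶠ ε in 𝓝[>] (0 : ℝ), ∀ i, ∀ x ∈ K,
      ‖iteratedFDeriv ℝ k (fun y => u ε y i) x‖ ≤ C / ε ^ p := by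
  choose p C hC h using fun i => hu i K hK k
  refine ⟨∑ i, p i, ∑ i, C i, Finset.sum_nonneg fun i _ => (hC i).le, ?_⟩
  filter_upwards [eventually_all.2 fun i => exists_pos_forall_lt_iff.1 (h i), eventually_small]
    with ε hε hε1 i x hx
  have hε0 := hε1.1
  refine (hε i x hx).trans ?_
  have h1 : C i ≤ ∑ j, C j := Finset.single_le_sum (fun j _ => (hC j).le) (Finset.mem_univ i)
  have h2 : p i ≤ ∑ j, p j := Finset.single_le_sum (fun j _ => Nat.zero_le _) (Finset.mem_univ i)
  have h3 : ε ^ (∑ j, p j) ≤ ε ^ p i := pow_le_pow_of_le_one hε0.le hε1.2 h2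
  have := (hC i).le
  gcongr
  exact this.trans h1

theorem pow_bound_mono {ε : ℝ} (hε : ε ∈ Ioc (0 : ℝ) 1) {C C' : ℝ} (hC : 0 ≤ C) (h : C ≤ C')
    {p p' : ℕ} (hp : p ≤ p') : C / ε ^ p ≤ C' / ε ^ p' := by
  have hε0 := hε.1
  have h3 : ε ^ p' ≤ ε ^ p := pow_le_pow_of_le_one hε0.le hε.2 hp
  have := hC.trans h
  gcongr

/-- Common moderateness constants for the first and second derivatives of all components. -/
theorem ModerateV.exists_uniform_fderiv {E : Type*} [NormedAddCommGroup E] [NormedSpace ℝ E]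
    {l : ℕ} {u : ℝ → E → (Fin l → ℝ)} (hu : ModerateV u) {K : Set E} (hK : IsCompact K) :
    ∃ p : ℕ, ∃ C ≥ (0 : ℝ), ∀ᶠ ε in 𝓝[>] (0 : ℝ), ∀ i, ∀ x ∈ K,
      ‖iteratedFDeriv ℝ 1 (fun y => u ε y i) x‖ ≤ C / ε ^ p ∧
        ‖iteratedFDeriv ℝ 2 (fun y => u ε y i) x‖ ≤ C / ε ^ p := by
  obtain ⟨p, C, hC, h⟩ := hu.exists_uniform hK 1
  obtain ⟨p', C', hC', h'⟩ := hu.exists_uniform hK 2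
  refine ⟨p + p', C + C', add_nonneg hC hC', ?_⟩
  filter_upwards [h, h', eventually_small] with ε h h' hε i x hx
  exact ⟨(h i x hx).trans (pow_bound_mono hε hC (by linarith) (by omega)),
    (h' i x hx).trans (pow_bound_mono hε hC' (by linarith) (by omega))⟩

/-- The estimate behind the theorem at a fixed `ε`: if `M` bounds the first two derivatives of the flow
at time `0` and of `F` on a set `K` containing the orbit of `x` up to time `1`, then `DF(x)·v(x)` is
bounded by the values of `F` at the two ends of the orbit segment of length `h`, divided by `h`, plus
`(M ^ 3 + M ^ 2) * h`. The open set `U` around `K`, with orbits trapped in a ball, serves only to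
make the flow differentiable. -/
theorem norm_fderiv_flow_le {m l : ℕ} {v : (Fin m → ℝ) → (Fin m → ℝ)} (hv : ContDiff ℝ 2 v)
    {Φ : ℝ × (Fin m → ℝ) → (Fin m → ℝ)} (h0 : ∀ z, Φ (0, z) = z)
    (hΦ : ∀ t z, HasDerivAt (fun s => Φ (s, z)) (v (Φ (t, z))) t)
    {F : (Fin m → ℝ) → (Fin l → ℝ)} (hF : ContDiff ℝ 2 F) {K U : Set (Fin m → ℝ)}
    (hU : IsOpen U) (hKU : K ⊆ U) {R : ℝ}
    (hΦB : ∀ z ∈ U, ∀ t, |t| ≤ 1 → Φ (t, z) ∈ Metric.closedBall 0 R) {M : ℝ} (hM : 0 ≤ M)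
    (hΦM : ∀ i, ∀ z ∈ K, ‖iteratedFDeriv ℝ 1 (fun p => Φ p i) (0, z)‖ ≤ M ∧
      ‖iteratedFDeriv ℝ 2 (fun p => Φ p i) (0, z)‖ ≤ M)
    (hFM : ∀ i, ∀ z ∈ K, ‖iteratedFDeriv ℝ 1 (fun y => F y i) z‖ ≤ M ∧
      ‖iteratedFDeriv ℝ 2 (fun y => F y i) z‖ ≤ M)
    {x : Fin m → ℝ} (hx : ∀ t ∈ Icc (0 : ℝ) 1, Φ (t, x) ∈ K) {h : ℝ} (hh0 : 0 < h) (hh1 : h ≤ 1) :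
    ‖fderiv ℝ F x (v x)‖ ≤ (‖F (Φ (h, x))‖ + ‖F x‖) / h + (M ^ 3 + M ^ 2) * h := by
  have hv1 : ∀ z ∈ K, ‖v z‖ ≤ M := fun z hz => (pi_norm_le_iff_of_nonneg hM).2 fun i =>
    (flow_component_bounds hv h0 hΦ hU hΦB (hKU hz) i).1.trans (hΦM i z hz).1
  have hv2 : ∀ z ∈ K, ‖fderiv ℝ v z (v z)‖ ≤ M := fun z hz =>
    (pi_norm_le_iff_of_nonneg hM).2 fun i =>
      (flow_component_bounds hv h0 hΦ hU hΦB (hKU hz) i).2.trans (hΦM i z hz).2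
  refine (pi_norm_le_iff_of_nonneg (by positivity)).2 fun i => ?_
  have hFi : ContDiff ℝ 2 fun y => F y i := contDiff_pi.1 hF i
  have hcomp : fderiv ℝ F x (v x) i = fderiv ℝ (fun y => F y i) x (v x) := by
    have := (hasFDerivAt_pi'.1 (hF.differentiable (by norm_num) x).hasFDerivAt i).fderiv
    rw [this]; rfl
  have := abs_fderiv_le_of_integralCurve hFi (hv.differentiable (by norm_num))
    (γ := fun t => Φ (t, x)) (fun t => hΦ t x)
    (fun s hs => by rw [← norm_iteratedFDeriv_one]; exact (hFM i _ (hx s hs)).1)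
    (fun s hs => by
      rw [← norm_iteratedFDeriv_one, norm_iteratedFDeriv_fderiv]; exact (hFM i _ (hx s hs)).2)
    (fun s hs => hv1 _ (hx s hs)) (fun s hs => hv2 _ (hx s hs)) hh0 hh1
  simp only [h0] at this
  rw [hcomp, Real.norm_eq_abs]
  refine this.trans ?_
  gcongr
  · exact norm_le_pi_norm (F (Φ (h, x))) i
  · exact norm_le_pi_norm (F x) i

theorem CBoundedMap.exists_closedBall {m : ℕ} {Φ : ℝ → (ℝ × (Fin m → ℝ)) → (Fin m → ℝ)}
    (hΦ : CBoundedMap Φ) (R : ℝ) : ∃ R' : ℝ, ∀ᶠ ε in 𝓝[>] (0 : ℝ),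
      ∀ z ∈ Metric.closedBall (0 : Fin m → ℝ) R, ∀ t : ℝ, |t| ≤ 1 →
        Φ ε (t, z) ∈ Metric.closedBall 0 R' := by
  obtain ⟨ε₀, hε₀, K, hK, h⟩ := hΦ (Icc (-1) 1 ×ˢ Metric.closedBall 0 R)
    (isCompact_Icc.prod (isCompact_closedBall 0 R))
  obtain ⟨R', hR'⟩ := hK.isBounded.subset_closedBall 0
  exact ⟨R', exists_pos_forall_lt_iff.1 ⟨ε₀, hε₀, fun ε h1 h2 z hz t ht =>
    hR' (h ε h1 h2 _ ⟨abs_le.1 ht, hz⟩)⟩⟩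

/-- if a generalized flow `Φ` of a net of smooth complete vector fields `ξ`
is a symmetry of the generalized equation `F = 0`, then `ξ(F) = DF·ξ` vanishes on the
solution set of `F = 0` (tested at compactly supported generalized points). -/
theorem stmt4 {m l : ℕ}
    (ξ : ℝ → (Fin m → ℝ) → (Fin m → ℝ))
    (Φ : ℝ → (ℝ × (Fin m → ℝ)) → (Fin m → ℝ))
    (hξsm : ∀ ε ∈ Set.Ioc (0:ℝ) 1, ContDiff ℝ (⊤ : ℕ∞) (ξ ε))
    (hflow0 : ∀ ε ∈ Set.Ioc (0:ℝ) 1, ∀ x : Fin m → ℝ, Φ ε (0, x) = x)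
    (hflow : ∀ ε ∈ Set.Ioc (0:ℝ) 1, ∀ (t : ℝ) (x : Fin m → ℝ),
      HasDerivAt (fun s => Φ ε (s, x)) (ξ ε (Φ ε (t, x))) t)
    (hΦcb : CBoundedMap Φ)
    (hΦmod : ModerateV Φ)
    (F : ℝ → (Fin m → ℝ) → (Fin l → ℝ))
    (hFsm : ∀ ε ∈ Set.Ioc (0:ℝ) 1, ContDiff ℝ (⊤ : ℕ∞) (F ε))
    (hFmod : ModerateV F)
    (hsym : ∀ x : ℝ → (Fin m → ℝ), CptSupNet x →
      (∀ q : ℕ, ∃ C > (0:ℝ), ∃ ε₀ > (0:ℝ), ∀ ε : ℝ, 0 < ε → ε < ε₀ →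
        ‖F ε (x ε)‖ ≤ C * ε ^ q) →
      ∀ η : ℝ → ℝ, (∃ B : ℝ, ∃ ε₀ > (0:ℝ), ∀ ε : ℝ, 0 < ε → ε < ε₀ → |η ε| ≤ B) →
      ∀ q : ℕ, ∃ C > (0:ℝ), ∃ ε₀ > (0:ℝ), ∀ ε : ℝ, 0 < ε → ε < ε₀ →
        ‖F ε (Φ ε (η ε, x ε))‖ ≤ C * ε ^ q) :
    ∀ x : ℝ → (Fin m → ℝ), CptSupNet x →
      (∀ q : ℕ, ∃ C > (0:ℝ), ∃ ε₀ > (0:ℝ), ∀ ε : ℝ, 0 < ε → ε < ε₀ →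
        ‖F ε (x ε)‖ ≤ C * ε ^ q) →
      ∀ q : ℕ, ∃ C > (0:ℝ), ∃ ε₀ > (0:ℝ), ∀ ε : ℝ, 0 < ε → ε < ε₀ →
        ‖fderiv ℝ (F ε) (x ε) (ξ ε (x ε))‖ ≤ C * ε ^ q := by
  intro x hx hxF q
  obtain ⟨K, hK, hxK⟩ := id hx
  rw [exists_pos_forall_lt_iff] at hxK
  obtain ⟨R₀, hR₀⟩ := hK.isBounded.subset_closedBall 0
  obtain ⟨R₁, hR₁⟩ := hΦcb.exists_closedBall R₀
  obtain ⟨R₂, hR₂⟩ := hΦcb.exists_closedBall (R₁ + 1)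
  obtain ⟨p₁, C₁, hC₁, hΦM⟩ := hΦmod.exists_uniform_fderiv
    (isCompact_singleton.prod (isCompact_closedBall (0 : Fin m → ℝ) R₁) :
      IsCompact (({0} : Set ℝ) ×ˢ _))
  obtain ⟨p₂, C₂, hC₂, hFM⟩ := hFmod.exists_uniform_fderiv
    (isCompact_closedBall (0 : Fin m → ℝ) R₁)
  obtain ⟨p, hp⟩ : ∃ p, p = p₁ + p₂ := ⟨_, rfl⟩
  obtain ⟨C, hCeq⟩ : ∃ C, C = C₁ + C₂ := ⟨_, rfl⟩
  have hC : 0 ≤ C := by rw [hCeq]; exact add_nonneg hC₁ hC₂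
  -- the step `ε ^ N` absorbs the factor `M ^ 3 = C ^ 3 / ε ^ (3 * p)` of the Taylor remainder
  obtain ⟨N, hN⟩ : ∃ N, N = 3 * p + q := ⟨_, rfl⟩
  -- order `N + q` leaves `ε ^ q` after division by the step
  obtain ⟨A, hA, hxA⟩ := hxF (N + q)
  obtain ⟨A', hA', hxA'⟩ := hsym x hx hxF (fun ε => ε ^ N)
    ⟨1, 1, one_pos, fun ε h1 h2 => by
      rw [abs_of_pos (pow_pos h1 N)]; exact pow_le_one₀ h1.le h2.le⟩ (N + q)
  rw [exists_pos_forall_lt_iff] at hxA hxA'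
  refine ⟨A' + A + (C ^ 3 + C ^ 2), by positivity, exists_pos_forall_lt_iff.2 ?_⟩
  filter_upwards [hxK, hR₁, hR₂, hΦM, hFM, hxA, hxA', eventually_small] with
    ε hxK hR₁ hR₂ hΦM hFM hxA hxA' hε
  have hε0 := hε.1
  have hM₁ : C₁ / ε ^ p₁ ≤ C / ε ^ p := pow_bound_mono hε hC₁ (by linarith) (by omega)
  have hM₂ : C₂ / ε ^ p₂ ≤ C / ε ^ p := pow_bound_mono hε hC₂ (by linarith) (by omega)
  have h2 : (2 : WithTop ℕ∞) ≤ ((⊤ : ℕ∞) : WithTop ℕ∞) := WithTop.coe_le_coe.2 (le_top (a := (2 : ℕ∞)))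
  have hmain := norm_fderiv_flow_le ((hξsm ε hε).of_le h2) (hflow0 ε hε) (hflow ε hε)
    ((hFsm ε hε).of_le h2) (K := Metric.closedBall 0 R₁) (U := Metric.ball 0 (R₁ + 1))
    Metric.isOpen_ball (Metric.closedBall_subset_ball (by linarith)) (R := R₂)
    (fun z hz => hR₂ z (Metric.ball_subset_closedBall hz)) (M := C / ε ^ p) (by positivity)
    (fun i z hz => ⟨(hΦM i (0, z) ⟨rfl, hz⟩).1.trans hM₁, (hΦM i (0, z) ⟨rfl, hz⟩).2.trans hM₁⟩)
    (fun i z hz => ⟨(hFM i z hz).1.trans hM₂, (hFM i z hz).2.trans hM₂⟩)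
    (x := x ε) (fun t ht => hR₁ _ (hR₀ hxK) t (by rw [abs_of_nonneg ht.1]; exact ht.2))
    (pow_pos hε0 N) (pow_le_one₀ hε0.le hε.2)
  have e1 : (A' * ε ^ (N + q) + A * ε ^ (N + q)) / ε ^ N = (A' + A) * ε ^ q := by
    rw [pow_add]; field_simp
  have e2 : ((C / ε ^ p) ^ 3 + (C / ε ^ p) ^ 2) * ε ^ N
      = C ^ 3 * ε ^ q + C ^ 2 * (ε ^ p * ε ^ q) := by
    rw [hN, pow_add, mul_comm 3 p, pow_mul]; field_simp
  have e3 : ε ^ p * ε ^ q ≤ ε ^ q :=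
    mul_le_of_le_one_left (by positivity) (pow_le_one₀ hε0.le hε.2)
  calc _ ≤ _ := hmain
    _ ≤ (A' * ε ^ (N + q) + A * ε ^ (N + q)) / ε ^ N
        + ((C / ε ^ p) ^ 3 + (C / ε ^ p) ^ 2) * ε ^ N := by gcongr
    _ ≤ (A' + A) * ε ^ q + (C ^ 3 * ε ^ q + C ^ 2 * ε ^ q) := by
        rw [e1, e2]; gcongr
    _ = _ := by ring
end

section
/- Let 1 ≤ l < m and C > 0. For each ε ∈ (0,1] let ξ_ε be a smooth complete vector field on ℝ^m with flow Φ_ε : ℝ × ℝ^m → ℝ^m, and assume: (a) the net (Φ_ε) is c-bounded; (b) Dξ is locally of L^∞-log-type: for every compact K ⊆ ℝ^m there is ε₀ with sup_{x∈K} ‖Dξ_ε(x)‖ ≤ C|log ε| for all ε < ε₀; (c) the first l components of ξ_ε are negligible on the slice: for every compact K'' ⊆ ℝ^{m−l}, every 1 ≤ k ≤ l and every q ∈ ℕ, sup_{y''∈K''} |ξ_{k,ε}(0,…,0,y'')| = O(ε^q). Let (x_ε) be a compactly supported point net in ℝ^m whose first l coordinates satisfy |x_{k,ε}| = O(ε^q)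 for all q ∈ ℕ (1 ≤ k ≤ l), and let (η_ε) be a bounded net of reals. Then for every 1 ≤ k ≤ l and every q ∈ ℕ, |Φ_{k,ε}(η_ε, x_ε)| = O(ε^q) as ε → 0, i.e. the flow keeps generalized points of the solution slice in the solution slice. -/
/-!
The transversal part `z = (y_1, …, y_l, 0, …, 0)` of an integral curve `y` of `ξ_ε` satisfies
`‖z'‖ ≤ ‖ξ_ε(y) - ξ_ε(y - z)‖ + |transversal part of ξ_ε(y - z)|`, where `y - z` is the projection
of `y` to the slice. By c-boundedness of the flow, `y` stays in a fixed ball, which for the sup norm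
is convex and stable under this projection. So the mean value inequality bounds the first summand by
`C |log ε| ‖z‖`, and the second one is negligible. Gronwall's inequality then gives
`‖z(η)‖ ≤ O(ε^N) · exp((C |log ε| + 1) B) = O(ε^(N - C B))` for `|η| ≤ B`, with `N` arbitrary.
-/


open Topology Filter Set

/-- Two-sided Gronwall estimate on `[-B, B]`. The assumption `1 ≤ K` avoids dividing by a small
`K` in the inhomogeneous term. -/
lemma gronwall_two_sided {E : Type*} [NormedAddCommGroup E] [NormedSpace ℝ E]
    {f f' : ℝ → E} {δ K e B : ℝ} (hK : 1 ≤ K) (he : 0 ≤ e)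
    (hf : ∀ t, HasDerivAt f (f' t) t) (h0 : ‖f 0‖ ≤ δ)
    (hb : ∀ t, |t| ≤ B → ‖f' t‖ ≤ K * ‖f t‖ + e) {t : ℝ} (ht : |t| ≤ B) :
    ‖f t‖ ≤ (δ + e) * Real.exp (K * B) := by
  have hδ : 0 ≤ δ := (norm_nonneg _).trans h0
  have forward : ∀ g g' : ℝ → E, (∀ t, HasDerivAt g (g' t) t) → ‖g 0‖ ≤ δ →
      (∀ t, |t| ≤ B → ‖g' t‖ ≤ K * ‖g t‖ + e) → ∀ t, 0 ≤ t → t ≤ B →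
      ‖g t‖ ≤ (δ + e) * Real.exp (K * B) := by
    intro g g' hg hg0 hgb t ht0 htB
    have h := norm_le_gronwallBound_of_norm_deriv_right_le (f := g) (f' := g') (a := 0) (b := B)
      (δ := δ) (K := K) (ε := e)
      (fun s _ => (hg s).continuousAt.continuousWithinAt)
      (fun s _ => (hg s).hasDerivWithinAt) hg0
      (fun s hs => hgb s (by rw [abs_of_nonneg hs.1]; exact hs.2.le)) t ⟨ht0, htB⟩
    rw [gronwallBound_of_K_ne_0 (by positivity), sub_zero] at h
    have hexp : Real.exp (K * t) ≤ Real.exp (K * B) := by gcongr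
    have h1 : 1 ≤ Real.exp (K * t) := Real.one_le_exp (by positivity)
    have h2 : e / K ≤ e := div_le_self he hK
    calc ‖g t‖ ≤ δ * Real.exp (K * t) + e / K * (Real.exp (K * t) - 1) := h
      _ ≤ δ * Real.exp (K * B) + e * Real.exp (K * B) := by
        gcongr
        linarith
      _ = _ := by ring
  rcases le_total 0 t with h | h
  · exact forward f f' hf h0 hb t h (le_of_abs_le ht)
  · have := forward (fun s => f (-s)) (fun s => -f' (-s))
      (fun s => by simpa [Function.comp_def] using (hf (-s)).scomp s (hasDerivAt_neg s))
      (by simpa using h0) (fun s hs => by simpa using hb (-s) (by simpa using hs)) (-t)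
      (by linarith) ((neg_le_abs t).trans ht)
    simpa using this

/-- The transversal projection: it keeps the first `l` coordinates and kills the others. -/
def transProj (m l : ℕ) : (Fin m → ℝ) →L[ℝ] (Fin m → ℝ) :=
  ContinuousLinearMap.pi fun i => if (i : ℕ) < l then ContinuousLinearMap.proj i else 0

lemma transProj_apply {m l : ℕ} (v : Fin m → ℝ) (i : Fin m) :
    transProj m l v i = if (i : ℕ) < l then v i else 0 := by
  simp only [transProj, ContinuousLinearMap.coe_pi']
  split_ifs <;> simp

lemma norm_transProj_le {m l : ℕ} (v : Fin m → ℝ) : ‖transProj m l v‖ ≤ ‖v‖ := by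
  refine (pi_norm_le_iff_of_nonneg (norm_nonneg _)).2 fun i => ?_
  rw [transProj_apply]
  split_ifs
  · exact norm_le_pi_norm v i
  · simp

lemma norm_sub_transProj_le {m l : ℕ} (v : Fin m → ℝ) : ‖v - transProj m l v‖ ≤ ‖v‖ := by
  refine (pi_norm_le_iff_of_nonneg (norm_nonneg _)).2 fun i => ?_
  rw [Pi.sub_apply, transProj_apply]
  split_ifs
  · simp
  · simpa using norm_le_pi_norm v i

lemma norm_transProj_le_of_abs_le {m l : ℕ} {v : Fin m → ℝ} {c : ℝ} (hc : 0 ≤ c)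
    (h : ∀ i : Fin m, (i : ℕ) < l → |v i| ≤ c) : ‖transProj m l v‖ ≤ c := by
  refine (pi_norm_le_iff_of_nonneg hc).2 fun i => ?_
  rw [transProj_apply]
  split_ifs with hi
  · exact h i hi
  · simpa using hc

lemma eventually_small_iff {p : ℝ → Prop} :
    (∃ ε₀ > (0:ℝ), ∀ ε : ℝ, 0 < ε → ε < ε₀ → p ε) ↔ ∀ᶠ ε in 𝓝[>] (0:ℝ), p ε := by
  rw [(nhdsGT_basis (0:ℝ)).eventually_iff]
  simp [and_imp]

/-- Finitely many `O(ε^N)` estimates hold with a common constant. -/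
lemma exists_common_bound {m N : ℕ} {S : Fin m → ℝ → Set ℝ}
    (h : ∀ k, ∃ c > (0:ℝ), ∀ᶠ ε in 𝓝[>] (0:ℝ), ∀ a ∈ S k ε, a ≤ c * ε ^ N) :
    ∃ c > (0:ℝ), ∀ᶠ ε in 𝓝[>] (0:ℝ), ∀ k, ∀ a ∈ S k ε, a ≤ c * ε ^ N := by
  have h' : ∀ k, ∀ᶠ c in atTop, ∀ᶠ ε in 𝓝[>] (0:ℝ), ∀ a ∈ S k ε, a ≤ c * ε ^ N := by
    intro k
    obtain ⟨c, -, hc⟩ := h k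
    filter_upwards [eventually_ge_atTop c] with d hd
    filter_upwards [hc, self_mem_nhdsWithin] with ε hε (hpos : 0 < ε) a ha
    exact (hε a ha).trans (by gcongr)
  obtain ⟨c, hc0, hc⟩ := ((eventually_gt_atTop (0:ℝ)).and (eventually_all.2 h')).exists
  exact ⟨c, hc0, eventually_all.2 hc⟩

/-- let `ξ_ε` be smooth complete vector fields on `ℝ^m` with flows `Φ_ε`
such that (a) `(Φ_ε)` is c-bounded, (b) `Dξ_ε` is locally of `L^∞`-log-type, and (c) the
first `l` components of `ξ_ε` are negligible on the slice `{0}^l × ℝ^{m-l}`. If `(x_ε)`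
is a compactly supported point net whose first `l` coordinates are negligible, and
`(η_ε)` is a bounded net of reals, then the first `l` coordinates of `Φ_ε(η_ε, x_ε)`
are negligible. -/
theorem stmt6 {m l : ℕ} (hl : 1 ≤ l) (hlm : l < m) (C : ℝ) (hC : 0 < C)
    (ξ : ℝ → (Fin m → ℝ) → (Fin m → ℝ))
    (Φ : ℝ → (ℝ × (Fin m → ℝ)) → (Fin m → ℝ))
    (hξsm : ∀ ε ∈ Set.Ioc (0:ℝ) 1, ContDiff ℝ (⊤ : ℕ∞) (ξ ε))
    (hflow0 : ∀ ε ∈ Set.Ioc (0:ℝ) 1, ∀ x : Fin m → ℝ, Φ ε (0, x) = x)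
    (hflow : ∀ ε ∈ Set.Ioc (0:ℝ) 1, ∀ (t : ℝ) (x : Fin m → ℝ),
      HasDerivAt (fun s => Φ ε (s, x)) (ξ ε (Φ ε (t, x))) t)
    (hΦcb : CBoundedMap Φ)
    (hlog : ∀ K : Set (Fin m → ℝ), IsCompact K → ∃ ε₀ > (0:ℝ), ∀ ε : ℝ, 0 < ε → ε < ε₀ →
      ∀ x ∈ K, ‖fderiv ℝ (ξ ε) x‖ ≤ C * |Real.log ε|)
    (hneg : ∀ K : Set (Fin m → ℝ), IsCompact K →
      (∀ y ∈ K, ∀ i : Fin m, (i : ℕ) < l → y i = 0) →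
      ∀ k : Fin m, (k : ℕ) < l → ∀ q : ℕ, ∃ C' > (0:ℝ), ∃ ε₀ > (0:ℝ),
        ∀ ε : ℝ, 0 < ε → ε < ε₀ → ∀ y ∈ K, |ξ ε y k| ≤ C' * ε ^ q)
    (x : ℝ → (Fin m → ℝ)) (hx : CptSupNet x)
    (hx' : ∀ k : Fin m, (k : ℕ) < l → ∀ q : ℕ, ∃ C' > (0:ℝ), ∃ ε₀ > (0:ℝ),
      ∀ ε : ℝ, 0 < ε → ε < ε₀ → |x ε k| ≤ C' * ε ^ q)
    (η : ℝ → ℝ) (hη : ∃ B : ℝ, ∃ ε₀ > (0:ℝ), ∀ ε : ℝ, 0 < ε → ε < ε₀ → |η ε| ≤ B) :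
    ∀ k : Fin m, (k : ℕ) < l → ∀ q : ℕ, ∃ C' > (0:ℝ), ∃ ε₀ > (0:ℝ),
      ∀ ε : ℝ, 0 < ε → ε < ε₀ → |Φ ε (η ε, x ε) k| ≤ C' * ε ^ q := by
  intro k hk q
  obtain ⟨B₀, hη⟩ := hη
  rw [eventually_small_iff] at hη
  obtain ⟨K, hK, hx⟩ := hx
  rw [eventually_small_iff] at hx
  set B := max B₀ 0
  have hB : 0 ≤ B := le_max_right _ _
  obtain ⟨ε₁, hε₁, K', hK', hΦK⟩ := hΦcb (Icc (-B) B ×ˢ K) (isCompact_Icc.prod hK)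
  have hΦK : ∀ᶠ ε in 𝓝[>] (0:ℝ), ∀ p ∈ Icc (-B) B ×ˢ K, Φ ε p ∈ K' :=
    eventually_small_iff.1 ⟨ε₁, hε₁, hΦK⟩
  obtain ⟨R, hR⟩ := hK'.isBounded.exists_norm_le
  have hlog := eventually_small_iff.1
    (hlog (Metric.closedBall 0 R) (isCompact_closedBall _ _))
  obtain ⟨M, hM⟩ := exists_nat_ge (C * B)
  -- Gronwall costs a factor `exp (C |log ε| B) ≤ ε ^ (-M)`, so precision `ε ^ (q + M)` is needed.
  obtain ⟨c₁, hc₁, hx₁⟩ := exists_common_bound (m := m) (N := q + M)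
    (S := fun k ε => {a | (k : ℕ) < l ∧ a = |x ε k|}) (by
      intro k
      by_cases hk : (k : ℕ) < l
      · obtain ⟨c, hc, h⟩ := hx' k hk (q + M)
        refine ⟨c, hc, (eventually_small_iff.1 h).mono fun ε hε => ?_⟩
        rintro a ⟨-, rfl⟩
        exact hε
      · exact ⟨1, one_pos, .of_forall fun ε a ha => absurd ha.1 hk⟩)
  let K₂ : Set (Fin m → ℝ) := (fun y => y - transProj m l y) '' Metric.closedBall 0 R
  have hK₂ : IsCompact K₂ := (isCompact_closedBall _ _).image (by fun_prop)
  have hK₂0 : ∀ y ∈ K₂, ∀ i : Fin m, (i : ℕ) < l → y i = 0 := by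
    rintro _ ⟨y, -, rfl⟩ i hi
    simp [transProj_apply, hi]
  obtain ⟨c₂, hc₂, hξ₂⟩ := exists_common_bound (m := m) (N := q + M)
    (S := fun k ε => {a | (k : ℕ) < l ∧ ∃ y ∈ K₂, a = |ξ ε y k|}) (by
      intro k
      by_cases hk : (k : ℕ) < l
      · obtain ⟨c, hc, h⟩ := hneg K₂ hK₂ hK₂0 k hk (q + M)
        refine ⟨c, hc, (eventually_small_iff.1 h).mono fun ε hε => ?_⟩
        rintro a ⟨-, y, hy, rfl⟩
        exact hε y hy
      · exact ⟨1, one_pos, .of_forall fun ε a ha => absurd ha.1 hk⟩)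
  refine ⟨(c₁ + c₂) * Real.exp B, by positivity, ?_⟩
  rw [eventually_small_iff]
  filter_upwards [hη, hx, hΦK, hlog, hx₁, hξ₂, Ioc_mem_nhdsGT (zero_lt_one' ℝ)]
    with ε hη hx hΦK hlog hx₁ hξ₂ hε
  have hpos : 0 < ε := hε.1
  have hL : |Real.log ε| = -Real.log ε := abs_of_nonpos (Real.log_nonpos hpos.le hε.2)
  have hball : ∀ t, |t| ≤ B → ‖Φ ε (t, x ε)‖ ≤ R := fun t ht =>
    hR _ (hΦK _ ⟨abs_le.1 ht, hx⟩)
  have key := gronwall_two_sided (f := fun t => transProj m l (Φ ε (t, x ε)))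
    (f' := fun t => transProj m l (ξ ε (Φ ε (t, x ε))))
    (δ := c₁ * ε ^ (q + M)) (e := c₂ * ε ^ (q + M)) (K := C * |Real.log ε| + 1) (B := B)
    (t := η ε) (le_add_of_nonneg_left (by positivity)) (by positivity)
    (fun t => (transProj m l).hasFDerivAt.comp_hasDerivAt t (hflow ε hε t (x ε)))
    (by
      rw [hflow0 ε hε]
      exact norm_transProj_le_of_abs_le (by positivity) fun i hi => hx₁ i _ ⟨hi, rfl⟩)
    (by
      intro t ht
      set y := Φ ε (t, x ε)
      have hy : y ∈ Metric.closedBall (0 : Fin m → ℝ) R := by simpa using hball t ht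
      have hPy : y - transProj m l y ∈ Metric.closedBall (0 : Fin m → ℝ) R := by
        simpa using (norm_sub_transProj_le y).trans (hball t ht)
      have h1 : ‖ξ ε y - ξ ε (y - transProj m l y)‖
          ≤ C * |Real.log ε| * ‖transProj m l y‖ := by
        simpa using (convex_closedBall (0 : Fin m → ℝ) R).norm_image_sub_le_of_norm_fderiv_le
          (𝕜 := ℝ) (f := ξ ε)
          (fun z _ => ((hξsm ε hε).differentiable (by simp)).differentiableAt) hlog hPy hy
      have h2 : ‖transProj m l (ξ ε (y - transProj m l y))‖ ≤ c₂ * ε ^ (q + M) :=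
        norm_transProj_le_of_abs_le (by positivity) fun i hi =>
          hξ₂ i _ ⟨hi, _, ⟨y, hy, rfl⟩, rfl⟩
      have h3 : transProj m l (ξ ε y) = transProj m l (ξ ε y - ξ ε (y - transProj m l y))
          + transProj m l (ξ ε (y - transProj m l y)) := by
        rw [← map_add, sub_add_cancel]
      calc ‖transProj m l (ξ ε y)‖
          ≤ ‖ξ ε y - ξ ε (y - transProj m l y)‖ + c₂ * ε ^ (q + M) := by
            rw [h3]
            exact (norm_add_le _ _).trans (add_le_add (norm_transProj_le _) h2)
        _ ≤ (C * |Real.log ε| + 1) * ‖transProj m l y‖ + c₂ * ε ^ (q + M) := by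
            have := norm_nonneg (transProj m l y)
            linarith)
    (hη.trans (le_max_left _ _))
  have hexp : Real.exp ((C * |Real.log ε| + 1) * B) ≤ Real.exp B * (ε ^ M)⁻¹ := by
    have : (ε ^ M)⁻¹ = Real.exp (M * |Real.log ε|) := by
      rw [hL, mul_neg, Real.exp_neg, Real.exp_nat_mul, Real.exp_log hpos]
    rw [this, ← Real.exp_add]
    gcongr
    nlinarith [abs_nonneg (Real.log ε)]
  calc |Φ ε (η ε, x ε) k| = ‖transProj m l (Φ ε (η ε, x ε)) k‖ := by
        rw [transProj_apply, if_pos hk, Real.norm_eq_abs]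
    _ ≤ ‖transProj m l (Φ ε (η ε, x ε))‖ := norm_le_pi_norm _ k
    _ ≤ (c₁ * ε ^ (q + M) + c₂ * ε ^ (q + M)) * Real.exp ((C * |Real.log ε| + 1) * B) := key
    _ ≤ (c₁ * ε ^ (q + M) + c₂ * ε ^ (q + M)) * (Real.exp B * (ε ^ M)⁻¹) := by gcongr
    _ = (c₁ + c₂) * Real.exp B * ε ^ q := by
        rw [pow_add]
        field_simp
end

section
/- Let (u_ε) be a moderate net of smooth functions on ℝ^n. Suppose that for every fixed real number η the net x ↦ u_ε(x + η e₁) − u_ε(x) is negligible on ℝ^n (invariance under all standard translations in the first coordinate). Then the net (∂u_ε/∂x₁) is negligible on ℝ^n; consequently standard translations suffice to characterize translational invariance of Colombeau generalized functions. -/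
/-!
The derivative at a point is a difference quotient with step `h`, up to an error `h * sup |∂₁²u|`.
Moderateness bounds the second derivative by `D / ε ^ p`, so with `h = ε ^ (m + p + 1)` the error is
`O(ε ^ m)`, and it suffices that `u ε (x + h e₁) - u ε x = O(ε ^ M)` for `M = m + (m + p + 1)`,
uniformly in `h` near `0` (`abs_fderiv_mul_le`). The hypothesis gives such a bound only for each
fixed translation, and a Baire category argument makes it uniform.

If negligibility fails, there are `ε k → 0` and `x k` in a compact set with
`|∂₁u (x k)| > (k + 1) * ε k ^ m`. Along this sequence, the closed sets of those `η` with
`|u (x k + η e₁) - u (x k)| ≤ N * ε k ^ M` for all `k ≥ N` cover the line, so one of them contains a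
neighbourhood of some `a` (`exists_ball_uniform_bound`). This bounds
`u (x k + (a + h) e₁) - u (x k + a e₁)` for all small `h`, and invariance under the single
translation by `a`, which is uniform on compact sets, moves the bound from `a` to `0`.
-/

open Topology Filter Set

/-- A net of smooth real-valued functions is negligible: it is moderate and its values
are `O(ε^m)` for every `m` uniformly on compact sets. -/
def NegligibleF {E : Type*} [NormedAddCommGroup E] [NormedSpace ℝ E]
    (u : ℝ → E → ℝ) : Prop :=
  ModerateF u ∧ ∀ K : Set E, IsCompact K → ∀ m : ℕ, ∃ C > (0:ℝ), ∃ ε₀ > (0:ℝ),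
    ∀ ε : ℝ, 0 < ε → ε < ε₀ → ∀ x ∈ K, |u ε x| ≤ C * ε ^ m

/-- Baire category: a sequence of continuous functions on the line that is pointwise `O(w k)` is
uniformly `O(w k)` near some point. -/
theorem exists_ball_uniform_bound (f : ℕ → ℝ → ℝ) (w : ℕ → ℝ) (hw : ∀ k, 0 ≤ w k)
    (hf : ∀ k, Continuous (f k))
    (h : ∀ η, ∃ C : ℝ, ∃ k₀ : ℕ, ∀ k ≥ k₀, |f k η| ≤ C * w k) :
    ∃ a : ℝ, ∃ r > (0 : ℝ), ∃ N : ℕ, ∀ η ∈ Metric.ball a r, ∀ k ≥ N, |f k η| ≤ N * w k := by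
  let A : ℕ → Set ℝ := fun N => {η | ∀ k ≥ N, |f k η| ≤ N * w k}
  have hA : ∀ N, IsClosed (A N) := by
    intro N
    simp only [A, Set.ofPred_forall]
    exact isClosed_iInter fun k => isClosed_iInter fun _ =>
      isClosed_le (hf k).abs continuous_const
  have hU : ⋃ N, A N = Set.univ := by
    refine Set.eq_univ_of_forall fun η => ?_
    obtain ⟨C, k₀, hC⟩ := h η
    obtain ⟨N, hN⟩ := exists_nat_ge C
    refine Set.mem_iUnion.2 ⟨max N k₀, fun k hk => ?_⟩
    refine (hC k (le_of_max_le_right hk)).trans ?_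
    refine mul_le_mul_of_nonneg_right (hN.trans ?_) (hw k)
    exact_mod_cast le_max_left N k₀
  obtain ⟨N, a, ha⟩ := nonempty_interior_of_iUnion_of_closed hA hU
  obtain ⟨r, hr, hsub⟩ := Metric.isOpen_iff.1 isOpen_interior a ha
  exact ⟨a, r, hr, N, fun η hη k hk => interior_subset (hsub hη) k hk⟩

/-- The directional derivative is a difference quotient up to an error controlled by the second
derivative. -/
theorem abs_fderiv_mul_le {E : Type*} [NormedAddCommGroup E] [NormedSpace ℝ E] {g : E → ℝ}
    (hg : ContDiff ℝ (⊤ : ℕ∞) g) (x e : E) {h B : ℝ} (hh : 0 < h)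
    (hB : ∀ t ∈ Set.Icc 0 h, ‖iteratedFDeriv ℝ 2 g (x + t • e)‖ ≤ B) :
    |fderiv ℝ g x e| * h ≤ |g (x + h • e) - g x| + B * ‖e‖ ^ 2 * h ^ 2 := by
  have hline : ∀ t : ℝ, HasDerivAt (fun t : ℝ => x + t • e) e t := fun t => by
    simpa using ((hasDerivAt_id t).smul_const e).const_add x
  have h1 : ∀ t : ℝ, HasDerivAt (fun t : ℝ => g (x + t • e)) (fderiv ℝ g (x + t • e) e) t :=
    fun t => ((hg.differentiable (by simp)) _).hasFDerivAt.comp_hasDerivAt t (hline t)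
  have hg' : ContDiff ℝ (⊤ : ℕ∞) (fderiv ℝ g) := hg.fderiv_right (by simp)
  have h2 : ∀ t : ℝ, HasDerivAt (fun t : ℝ => fderiv ℝ g (x + t • e) e)
      (fderiv ℝ (fderiv ℝ g) (x + t • e) e e) t := fun t =>
    (((hg'.differentiable (by simp)) _).hasFDerivAt.comp_hasDerivAt t (hline t)).clm_apply
      (hasDerivAt_const t e) |>.congr_deriv (by simp)
  have hn : ∀ y, ‖fderiv ℝ (fderiv ℝ g) y e e‖ ≤ ‖iteratedFDeriv ℝ 2 g y‖ * ‖e‖ ^ 2 := by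
    intro y
    have : ‖iteratedFDeriv ℝ 2 g y‖ = ‖fderiv ℝ (fderiv ℝ g) y‖ := by
      rw [← norm_iteratedFDeriv_fderiv, norm_iteratedFDeriv_one]
    rw [this, pow_two, ← mul_assoc]
    exact ContinuousLinearMap.le_opNorm₂ _ _ _
  obtain ⟨c, hc, hslope⟩ := exists_hasDerivAt_eq_slope (fun t : ℝ => g (x + t • e))
    (fun t => fderiv ℝ g (x + t • e) e) hh
    (fun t _ => (h1 t).continuousAt.continuousWithinAt) (fun t _ => h1 t)
  have hB0 : 0 ≤ B := (norm_nonneg _).trans (hB 0 ⟨le_rfl, hh.le⟩)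
  have h3 : ‖fderiv ℝ g (x + c • e) e - fderiv ℝ g (x + (0:ℝ) • e) e‖
      ≤ B * ‖e‖ ^ 2 * (c - 0) :=
    norm_image_sub_le_of_norm_deriv_le_segment' (f := fun t : ℝ => fderiv ℝ g (x + t • e) e)
      (a := 0) (b := h)
      (fun t _ => (h2 t).hasDerivWithinAt)
      (fun t ht => (hn _).trans (mul_le_mul_of_nonneg_right (hB t ⟨ht.1, ht.2.le⟩)
        (by positivity))) c ⟨hc.1.le, hc.2.le⟩
  simp only [zero_smul, add_zero, sub_zero, Real.norm_eq_abs] at h3 hslope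
  rw [eq_div_iff hh.ne'] at hslope
  rw [← hslope, abs_mul, abs_of_pos hh]
  have h4 : B * ‖e‖ ^ 2 * c ≤ B * ‖e‖ ^ 2 * h := by gcongr; exact hc.2.le
  have h5 : |fderiv ℝ g x e| ≤ |fderiv ℝ g (x + c • e) e| + B * ‖e‖ ^ 2 * h := by
    have := abs_sub_abs_le_abs_sub (fderiv ℝ g x e) (fderiv ℝ g (x + c • e) e)
    rw [abs_sub_comm] at this
    linarith
  nlinarith [mul_le_mul_of_nonneg_right h5 hh.le]

theorem moderateF_fderiv_apply {E : Type*} [NormedAddCommGroup E] [NormedSpace ℝ E]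
    {u : ℝ → E → ℝ} (hus : ∀ ε ∈ Set.Ioc (0:ℝ) 1, ContDiff ℝ (⊤ : ℕ∞) (u ε))
    (humod : ModerateF u) (e : E) :
    ModerateF (fun ε x => fderiv ℝ (u ε) x e) := by
  intro K hK k
  obtain ⟨p, C, hC, ε₀, hε₀, hb⟩ := humod K hK (k + 1)
  refine ⟨p, C * (‖e‖ + 1), by positivity, min ε₀ 1, by positivity, fun ε hε hlt x hx => ?_⟩
  have hs := hus ε ⟨hε, (hlt.trans_le (min_le_right _ _)).le⟩
  have hs' : ContDiff ℝ (⊤ : ℕ∞) (fderiv ℝ (u ε)) := hs.fderiv_right (by simp)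
  have h1 := norm_iteratedFDeriv_clm_apply_const (c := e) (n := k) (x := x)
    (N := ((⊤ : ℕ∞) : WithTop ℕ∞)) hs'.contDiffAt (by exact_mod_cast le_top)
  rw [norm_iteratedFDeriv_fderiv] at h1
  have h2 := hb ε hε (hlt.trans_le (min_le_left _ _)) x hx
  calc _ ≤ ‖e‖ * ‖iteratedFDeriv ℝ (k + 1) (u ε) x‖ := h1
    _ ≤ (‖e‖ + 1) * (C / ε ^ p) := by gcongr; linarith
    _ = _ := by ring

/-- Translational invariance in a direction `e` forces the derivative along `e` to be negligible,
in any normed space. -/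
theorem negligibleF_fderiv_apply {E : Type*} [NormedAddCommGroup E] [NormedSpace ℝ E]
    {u : ℝ → E → ℝ} (hus : ∀ ε ∈ Set.Ioc (0:ℝ) 1, ContDiff ℝ (⊤ : ℕ∞) (u ε))
    (humod : ModerateF u) (e : E)
    (hinv : ∀ η : ℝ, NegligibleF (fun ε (x : E) => u ε (x + η • e) - u ε x)) :
    NegligibleF (fun ε x => fderiv ℝ (u ε) x e) := by
  refine ⟨moderateF_fderiv_apply hus humod e, fun K hK m => ?_⟩
  by_contra! hcon
  choose ε hε hεlt x hxK hbig using fun k : ℕ =>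
    hcon (k + 1) (by positivity) (1 / ((k : ℝ) + 1)) (by positivity)
  have hε1 : ∀ k, ε k ≤ 1 := fun k => (hεlt k).le.trans <| by
    rw [div_le_one (by positivity)]; linarith [(Nat.cast_nonneg k : (0:ℝ) ≤ k)]
  have hev : ∀ δ > (0:ℝ), ∃ k₀ : ℕ, ∀ k ≥ k₀, ε k < δ := by
    intro δ hδ
    obtain ⟨k₀, hk₀⟩ := exists_nat_one_div_lt hδ
    exact ⟨k₀, fun k hk => (hεlt k).trans <|
      (one_div_le_one_div_of_le (by positivity) (by gcongr)).trans_lt hk₀⟩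
  let K' : Set E := (fun q : E × ℝ => q.1 + q.2 • e) '' (K ×ˢ Set.Icc (0:ℝ) 1)
  have hK' : IsCompact K' := (hK.prod isCompact_Icc).image (by fun_prop)
  have hmem : ∀ k, ∀ t ∈ Set.Icc (0:ℝ) 1, x k + t • e ∈ K' := fun k t ht =>
    ⟨(x k, t), ⟨hxK k, ht⟩, rfl⟩
  obtain ⟨p, D, hD, ε₁, hε₁, hD2⟩ := humod K' hK' 2
  let M := m + (m + p + 1)
  obtain ⟨a, r, hr, N, hN⟩ := exists_ball_uniform_bound
    (fun k η => u (ε k) (x k + η • e) - u (ε k) (x k)) (fun k => ε k ^ M)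
    (fun k => (pow_pos (hε k) _).le)
    (fun k => by
      have := (hus (ε k) ⟨hε k, hε1 k⟩).continuous
      fun_prop)
    (fun η => by
      obtain ⟨C, -, δ, hδ, hC⟩ := (hinv η).2 K hK M
      obtain ⟨k₀, hk₀⟩ := hev δ hδ
      exact ⟨C, k₀, fun k hk => hC _ (hε k) (hk₀ k hk) _ (hxK k)⟩)
  obtain ⟨C, hC0, ε₂, hε₂, hC⟩ := (hinv a).2 K' hK' M
  obtain ⟨k₁, hk₁⟩ := hev (min (min ε₁ ε₂) r) (by positivity)
  obtain ⟨k₂, hk₂⟩ := exists_nat_ge (2 * N + 2 * C + D * ‖e‖ ^ 2)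
  obtain ⟨k, hkN, hkk₁, hkk₂⟩ : ∃ k, N ≤ k ∧ k₁ ≤ k ∧ k₂ ≤ k :=
    ⟨max N (max k₁ k₂), by simp, by simp, by simp⟩
  have hlt := hk₁ k hkk₁
  simp only [lt_min_iff] at hlt
  obtain ⟨⟨hlt1, hlt2⟩, hltr⟩ := hlt
  have hk0 := hε k
  have hk1 := hε1 k
  have hbk := hbig k
  set d := ε k with hd
  set y := x k with hy
  -- the step `h` makes both `d ^ M / h` and `h / d ^ p` at most `d ^ m`, and `h ≤ d < r`
  set h := d ^ (m + p + 1) with hh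
  have hhpos : 0 < h := pow_pos hk0 _
  have hhd : h ≤ d := pow_le_of_le_one hk0.le hk1 (by omega)
  have hI : ∀ t ∈ Set.Icc 0 h, t ∈ Set.Icc (0:ℝ) 1 := fun t ht =>
    ⟨ht.1, ht.2.trans (hhd.trans hk1)⟩
  have hdiff : |u d (y + h • e) - u d y| ≤ (2 * N + 2 * C) * d ^ M := by
    have e1 := hN (a + h) (by
      rw [Metric.mem_ball, Real.dist_eq, add_sub_cancel_left, abs_of_pos hhpos]
      linarith) k hkN
    have e2 := hN a (Metric.mem_ball_self hr) k hkN
    have e3 := hC d hk0 hlt2 _ (hmem k h (hI h ⟨hhpos.le, le_rfl⟩))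
    have e4 := hC d hk0 hlt2 _ (hmem k 0 ⟨le_rfl, zero_le_one⟩)
    have e5 : y + (a + h) • e = y + h • e + a • e := by module
    simp only [zero_smul, add_zero, ← hd, ← hy, abs_le] at e1 e2 e3 e4 ⊢
    rw [e5] at e1
    constructor <;> linarith
  have hmain := abs_fderiv_mul_le (hus d ⟨hk0, hk1⟩) y e hhpos
    (fun t ht => hD2 d hk0 hlt1 _ (hmem k t (hI t ht)))
  have hMh : d ^ M = d ^ m * h := by rw [hh, ← pow_add]
  have hph : D / d ^ p * ‖e‖ ^ 2 * h ^ 2 = D * ‖e‖ ^ 2 * d ^ (m + 1) * h := by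
    have : h = d ^ p * d ^ (m + 1) := by rw [hh, ← pow_add]; congr 1; omega
    rw [pow_two h]
    nth_rewrite 1 [this]
    field_simp
  have hm1 : d ^ (m + 1) ≤ d ^ m := pow_le_pow_of_le_one hk0.le hk1 (by omega)
  rw [hph] at hmain
  rw [hMh] at hdiff
  have hfin : |fderiv ℝ (u d) y e| ≤ (2 * N + 2 * C) * d ^ m + D * ‖e‖ ^ 2 * d ^ (m + 1) := by
    refine le_of_mul_le_mul_right ?_ hhpos
    linarith
  have h6 : D * ‖e‖ ^ 2 * d ^ (m + 1) ≤ D * ‖e‖ ^ 2 * d ^ m := by gcongr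
  have hkk : (k₂ : ℝ) ≤ k := by exact_mod_cast hkk₂
  have h7 : (2 * N + 2 * C + D * ‖e‖ ^ 2) * d ^ m ≤ ((k:ℝ) + 1) * d ^ m :=
    mul_le_mul_of_nonneg_right (by linarith) (by positivity)
  linarith

/-- if a moderate net `(u_ε)` of smooth functions on `ℝ^n` is invariant
under every standard translation in the first coordinate (i.e. for each fixed `η ∈ ℝ`
the net `x ↦ u_ε(x + η e₁) - u_ε(x)` is negligible), then `∂u_ε/∂x₁` is negligible:
standard translations suffice to characterize translational invariance. -/
theorem stmt11 {n : ℕ} [NeZero n]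
    (u : ℝ → (Fin n → ℝ) → ℝ)
    (hus : ∀ ε ∈ Set.Ioc (0:ℝ) 1, ContDiff ℝ (⊤ : ℕ∞) (u ε))
    (humod : ModerateF u)
    (hinv : ∀ η : ℝ, NegligibleF (fun ε (x : Fin n → ℝ) =>
      u ε (x + η • (Pi.single (0 : Fin n) (1:ℝ) : Fin n → ℝ)) - u ε x)) :
    NegligibleF (fun ε x => fderiv ℝ (u ε) x (Pi.single (0 : Fin n) (1:ℝ))) := by
  exact negligibleF_fderiv_apply hus humod _ hinv
end

section
/- Let (u_ε) be a moderate net of smooth functions on ℝ^n. The following are equivalent: (i) u is invariant under all generalized rotations: for every moderate net (A_ε) of real n×n matrices such that all entries of A_ε^T A_ε − I and det A_ε − 1 are O(ε^m) for every m ∈ ℕ, the net x ↦ u_ε(A_ε x) − u_ε(x) is negligible on ℝ^n; (ii) for all 1 ≤ i < j ≤ n the net x ↦ x_i ∂u_ε/∂x_j(x) − x_j ∂u_ε/∂x_i(x) is negligible on ℝ^n; (iii) there exists a net (u'_ε) of smooth functions, each rotationally invariant (u'_ε(Ax) = u'_ε(x) for all A ∈ SO(n,ℝ) and x ∈ ℝ^n),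 with (u_ε − u'_ε) negligible. -/
/-!
The link between finite and infinitesimal rotations is the one-parameter group `planeRot a b t` of
rotations in the plane of an orthonormal pair: the derivative of `t ↦ f (planeRot a b t x)` is a
combination, with coefficients at most one, of the infinitesimal rotations `rotD i j f`.

* Invariance gives negligible infinitesimal rotations (`rotD_negligible`): rotate by the angle
  `ε ^ q` in a coordinate plane. The mean value theorem turns the difference quotient into a value
  of `rotD i j (u ε)` at a point within `O(ε ^ q)`, and a large `q` beats the moderate Lipschitz
  constant of `rotD i j (u ε)`.
* Negligible infinitesimal rotations give an invariant representative (`exists_invariant`), namely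
  the average of `u ε` over the Haar measure of `SO(n)`. Any `A x` with `A ∈ SO(n)` is reached from
  `x` along the arc of a circle, so `u ε (A x) - u ε x` is negligible uniformly in `A`
  (`sub_le_of_rotD_le`), hence so is the difference of `u ε` and its average.
* An invariant representative gives invariance (`invariant_of_representative`). It is not necessary
  to approximate a generalized rotation by exact ones as matrices: for each single `x`, the vector
  `A x` has almost the length of `x`, so for `n ≥ 2` some exact rotation of `x` is close to it
  (`exists_SO_near`); for `n ≤ 1` the condition on the determinant is what makes `A` close to the
  identity. The moderate Lipschitz constant of `u ε` controls the remaining error.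
-/

open Topology Filter Set Matrix

/-- A net of real `n×n` matrices representing a generalized rotation: it is moderate
(entrywise `O(ε^{-p})` for some `p`) and all entries of `A_ε^T A_ε - I` as well as
`det A_ε - 1` are `O(ε^m)` for every `m`. -/
def GenRotation {n : ℕ} (A : ℝ → Matrix (Fin n) (Fin n) ℝ) : Prop :=
  (∀ i j : Fin n, ∃ p : ℕ, ∃ C > (0:ℝ), ∃ ε₀ > (0:ℝ), ∀ ε : ℝ, 0 < ε → ε < ε₀ →
      |A ε i j| ≤ C / ε ^ p) ∧
  (∀ i j : Fin n, ∀ m : ℕ, ∃ C > (0:ℝ), ∃ ε₀ > (0:ℝ), ∀ ε : ℝ, 0 < ε → ε < ε₀ →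
      |((A ε)ᵀ * A ε - 1) i j| ≤ C * ε ^ m) ∧
  (∀ m : ℕ, ∃ C > (0:ℝ), ∃ ε₀ > (0:ℝ), ∀ ε : ℝ, 0 < ε → ε < ε₀ →
      |(A ε).det - 1| ≤ C * ε ^ m)

/-! ### Averaging over the special orthogonal group -/

open MeasureTheory in
/-- Integration commutes with linear isometries. Stated for abstract spaces because on spaces of
multilinear maps the instances found along different paths agree only up to unfolding. -/
lemma integral_comp_isometryEquiv {G V W : Type*} [MeasurableSpace G] {μ : Measure G}
    [NormedAddCommGroup V] [NormedSpace ℝ V] [CompleteSpace V]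
    [NormedAddCommGroup W] [NormedSpace ℝ W] [CompleteSpace W] (I : V ≃ₗᵢ[ℝ] W) {φ : G → V}
    (hφ : Integrable φ μ) :
    Integrable (fun g => I (φ g)) μ ∧ ∫ g, I (φ g) ∂μ = I (∫ g, φ g ∂μ) :=
  ⟨I.toContinuousLinearEquiv.toContinuousLinearMap.integrable_comp hφ,
    I.toContinuousLinearEquiv.toContinuousLinearMap.integral_comp_comm hφ⟩

open MeasureTheory in
/-- Differentiation under the integral sign to all orders, in the language of Taylor series:
over a compact parameter space, the integral of a family of smooth functions is smooth and its
Taylor series is the integral of the Taylor series. -/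
lemma hasFTaylorSeriesUpTo_integral {n : ℕ} {G : Type*} [TopologicalSpace G] [CompactSpace G]
    [MeasurableSpace G] [BorelSpace G] (μ : Measure G) [IsFiniteMeasure μ]
    (F : G → (Fin n → ℝ) → ℝ) (q : G → (Fin n → ℝ) → FormalMultilinearSeries ℝ (Fin n → ℝ) ℝ)
    (hq : ∀ g, HasFTaylorSeriesUpTo (⊤ : ℕ∞) (F g) (q g))
    (hc : ∀ k, Continuous fun z : G × (Fin n → ℝ) => q z.1 z.2 k) :
    HasFTaylorSeriesUpTo (⊤ : ℕ∞) (fun x => ∫ g, F g x ∂μ) (fun x k => ∫ g, q g x k ∂μ) := by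
  have hint : ∀ k x, Integrable (fun g => q g x k) μ := fun k x =>
    ((hc k).comp (by fun_prop : Continuous fun g : G => (g, x))).integrable_of_hasCompactSupport
      (HasCompactSupport.of_compactSpace _)
  have hder : ∀ m : ℕ, ∀ x, HasFDerivAt (fun y => ∫ g, q g y m ∂μ)
      (∫ g, q g x m.succ ∂μ).curryLeft x := by
    intro m x
    let I := continuousMultilinearCurryLeftEquiv ℝ (fun _ : Fin (m + 1) => Fin n → ℝ) ℝ
    have hI : (∫ g, q g x m.succ ∂μ).curryLeft = ∫ g, (q g x m.succ).curryLeft ∂μ := by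
      have := integral_comp_isometryEquiv
        (W := (Fin n → ℝ) →L[ℝ] ((Fin n → ℝ) [×m]→L[ℝ] ℝ)) I (hint m.succ x)
      exact this.2.symm
    rw [hI]
    obtain ⟨C, hC⟩ := (isCompact_univ.prod (isCompact_closedBall x 1)).exists_bound_of_continuousOn
      (hc m.succ).continuousOn
    refine hasFDerivAt_integral_of_dominated_of_fderiv_le (s := Metric.closedBall x 1)
      (F' := fun x g => (q g x m.succ).curryLeft)
      (bound := fun _ => C) (Metric.closedBall_mem_nhds x one_pos)
      (Eventually.of_forall fun y => (hint m y).aestronglyMeasurable) (hint m x)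
      ?_ ?_ (integrable_const _) ?_
    · exact ((integral_comp_isometryEquiv
        (W := (Fin n → ℝ) →L[ℝ] ((Fin n → ℝ) [×m]→L[ℝ] ℝ)) I (hint m.succ x)).1).aestronglyMeasurable
    · refine Eventually.of_forall fun g y hy => ?_
      have := hC (g, y) ⟨trivial, hy⟩
      rwa [← I.norm_map] at this
    · exact Eventually.of_forall fun g y _ => (hq g).fderiv m (by exact_mod_cast ENat.natCast_lt_top m) y
  refine ⟨fun x => ?_, fun m _ x => hder m x, fun m _ => ?_⟩
  · have h := (integral_comp_isometryEquiv (continuousMultilinearCurryFin0 ℝ (Fin n → ℝ) ℝ)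
      (hint 0 x)).2
    refine h.symm.trans (integral_congr_ae (Eventually.of_forall fun g => ?_))
    exact (hq g).zero_eq x
  · exact continuous_iff_continuousAt.2 fun x => (hder m x).continuousAt

/-- The linear map sending a matrix to its action on vectors, as a continuous linear map. -/
noncomputable def actL (n : ℕ) :
    Matrix (Fin n) (Fin n) ℝ →ₗ[ℝ] ((Fin n → ℝ) →L[ℝ] (Fin n → ℝ)) :=
  (LinearMap.toContinuousLinearMap : ((Fin n → ℝ) →ₗ[ℝ] (Fin n → ℝ)) ≃ₗ[ℝ] _).toLinearMap ∘ₗ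
    (Matrix.toLin' : Matrix (Fin n) (Fin n) ℝ ≃ₗ[ℝ] _).toLinearMap

@[simp] lemma actL_apply {n : ℕ} (A : Matrix (Fin n) (Fin n) ℝ) (x : Fin n → ℝ) :
    actL n A x = A.mulVec x := rfl

lemma actL_continuous (n : ℕ) : Continuous (actL n) :=
  LinearMap.continuous_of_finiteDimensional _

lemma mem_SO_iff {n : ℕ} {A : Matrix (Fin n) (Fin n) ℝ} :
    A ∈ specialUnitaryGroup (Fin n) ℝ ↔ Aᵀ * A = 1 ∧ A.det = 1 := by
  rw [mem_specialUnitaryGroup_iff, mem_unitaryGroup_iff', star_eq_conjTranspose,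
    conjTranspose_eq_transpose_of_trivial]

instance SO_isTopologicalGroup (n : ℕ) :
    IsTopologicalGroup (specialUnitaryGroup (Fin n) ℝ) where
  continuous_inv := by
    refine Continuous.subtype_mk (f := fun A : specialUnitaryGroup (Fin n) ℝ => star A.1) ?_ _
    exact continuous_subtype_val.star

instance SO_compactSpace (n : ℕ) : CompactSpace (specialUnitaryGroup (Fin n) ℝ) := by
  apply isCompact_iff_compactSpace.1
  have hb : IsCompact (Set.univ.pi fun _ => Set.univ.pi fun _ => Set.Icc (-1) 1 :
      Set (Matrix (Fin n) (Fin n) ℝ)) :=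
    isCompact_univ_pi fun _ => isCompact_univ_pi fun _ => isCompact_Icc
  refine hb.of_isClosed_subset ?_ fun A hA i _ j _ => ?_
  · have : (specialUnitaryGroup (Fin n) ℝ : Set (Matrix (Fin n) (Fin n) ℝ)) =
        {A | Aᵀ * A = 1 ∧ A.det = 1} := by
      ext A; exact mem_SO_iff
    rw [this]
    exact (isClosed_eq (by fun_prop) continuous_const).inter
      (isClosed_eq (by fun_prop) continuous_const)
  · have := entry_norm_bound_of_unitary hA.1 i j
    rwa [Real.norm_eq_abs, abs_le] at this

/-- Rotations are uniformly bounded as operators. -/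
lemma SO_bound (n : ℕ) : ∃ C : ℝ, 1 ≤ C ∧ ∀ A ∈ specialUnitaryGroup (Fin n) ℝ, ‖actL n A‖ ≤ C := by
  obtain ⟨C, hC⟩ := (isCompact_iff_compactSpace.2 (SO_compactSpace n)).exists_bound_of_continuousOn
    (actL_continuous n).continuousOn
  exact ⟨max C 1, le_max_right _ _, fun A hA => (hC A hA).trans (le_max_left _ _)⟩

instance SO_measurableSpace (n : ℕ) : MeasurableSpace (specialUnitaryGroup (Fin n) ℝ) := borel _

instance SO_borelSpace (n : ℕ) : BorelSpace (specialUnitaryGroup (Fin n) ℝ) := ⟨rfl⟩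

/-- The Haar measure of `SO(n)`, of total mass one. -/
noncomputable def haarSO (n : ℕ) : MeasureTheory.Measure (specialUnitaryGroup (Fin n) ℝ) :=
  MeasureTheory.Measure.haarMeasure ⊤

instance haarSO_isProb (n : ℕ) : MeasureTheory.IsProbabilityMeasure (haarSO n) :=
  ⟨by
    have := MeasureTheory.Measure.haarMeasure_self
      (K₀ := (⊤ : TopologicalSpace.PositiveCompacts (specialUnitaryGroup (Fin n) ℝ)))
    rwa [TopologicalSpace.PositiveCompacts.coe_top] at this⟩

instance haarSO_inv (n : ℕ) : (haarSO n).IsMulLeftInvariant :=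
  inferInstanceAs (MeasureTheory.Measure.haarMeasure ⊤).IsMulLeftInvariant

/-- The average of `f` over its rotations. The argument is rotated by the inverse `h⁻¹`, so that
left invariance of the Haar measure yields rotation invariance of the average. -/
noncomputable def avg {n : ℕ} (f : (Fin n → ℝ) → ℝ) (x : Fin n → ℝ) : ℝ :=
  ∫ h, f ((h⁻¹).1.mulVec x) ∂(haarSO n)

lemma avg_invariant {n : ℕ} (f : (Fin n → ℝ) → ℝ) {A : Matrix (Fin n) (Fin n) ℝ}
    (hA : A ∈ specialUnitaryGroup (Fin n) ℝ) (x : Fin n → ℝ) : avg f (A.mulVec x) = avg f x := by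
  let a : specialUnitaryGroup (Fin n) ℝ := ⟨A, hA⟩
  refine (MeasureTheory.integral_mul_left_eq_self (μ := haarSO n) _ a).symm.trans
    (MeasureTheory.integral_congr_ae (Eventually.of_forall fun h => ?_))
  have : (a * h)⁻¹.1 * A = (h⁻¹).1 := congrArg Subtype.val (show (a * h)⁻¹ * a = h⁻¹ by group)
  simp only [Matrix.mulVec_mulVec, this]

/-- The Taylor series of the average, in terms of that of the function. -/
lemma avg_taylor {n : ℕ} {f : (Fin n → ℝ) → ℝ} (hf : ContDiff ℝ (⊤ : ℕ∞) f) :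
    HasFTaylorSeriesUpTo (⊤ : ℕ∞) (avg f) (fun x k => ∫ h,
      (iteratedFDeriv ℝ k f ((h⁻¹).1.mulVec x)).compContinuousLinearMap
        (fun _ => actL n (h⁻¹).1) ∂(haarSO n)) := by
  refine hasFTaylorSeriesUpTo_integral (haarSO n)
    (fun h x => f ((h⁻¹).1.mulVec x))
    (fun h x k => (iteratedFDeriv ℝ k f ((h⁻¹).1.mulVec x)).compContinuousLinearMap
        (fun _ => actL n (h⁻¹).1)) (fun h => ?_) (fun k => ?_)
  · have h1 : ContDiff ℝ (⊤ : ℕ∞) (f ∘ actL n (h⁻¹).1) := hf.comp (actL n (h⁻¹).1).contDiff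
    have h2 := contDiff_iff_ftaylorSeries.1 h1
    have h3 : ftaylorSeries ℝ (f ∘ actL n (h⁻¹).1) = fun x k =>
        (iteratedFDeriv ℝ k f ((h⁻¹).1.mulVec x)).compContinuousLinearMap
          (fun _ => actL n (h⁻¹).1) := by
      ext1 x; ext1 k
      exact (actL n (h⁻¹).1).iteratedFDeriv_comp_right hf x (by exact_mod_cast le_top)
    rw [h3] at h2
    exact h2
  · have hi : Continuous fun z : specialUnitaryGroup (Fin n) ℝ × (Fin n → ℝ) => (z.1⁻¹).1 :=
      continuous_subtype_val.comp (continuous_inv.comp continuous_fst)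
    have hF : Continuous (iteratedFDeriv ℝ k f) :=
      hf.continuous_iteratedFDeriv (by exact_mod_cast le_top)
    have h1 : Continuous fun z : specialUnitaryGroup (Fin n) ℝ × (Fin n → ℝ) =>
        iteratedFDeriv ℝ k f ((z.1⁻¹).1.mulVec z.2) := hF.comp (hi.matrix_mulVec continuous_snd)
    have h2 : Continuous fun z : specialUnitaryGroup (Fin n) ℝ × (Fin n → ℝ) =>
        actL n (z.1⁻¹).1 := (actL_continuous n).comp hi
    have h3 := (ContinuousMultilinearMap.compContinuousLinearMapContinuousMultilinear ℝ
      (fun _ : Fin k => Fin n → ℝ) (fun _ => Fin n → ℝ) ℝ).cont.comp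
      (continuous_pi fun _ : Fin k => h2)
    exact h3.clm_apply h1

lemma avg_contDiff {n : ℕ} {f : (Fin n → ℝ) → ℝ} (hf : ContDiff ℝ (⊤ : ℕ∞) f) :
    ContDiff ℝ (⊤ : ℕ∞) (avg f) := (avg_taylor hf).contDiff

lemma norm_compCLM_const_le {n k : ℕ}
    (g : ContinuousMultilinearMap ℝ (fun _ : Fin k => Fin n → ℝ) ℝ)
    (L : (Fin n → ℝ) →L[ℝ] (Fin n → ℝ)) {B C : ℝ} (hg : ‖g‖ ≤ B) (hL : ‖L‖ ≤ C) :
    ‖g.compContinuousLinearMap fun _ => L‖ ≤ B * C ^ k := by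
  refine (g.norm_compContinuousLinearMap_le _).trans ?_
  rw [Finset.prod_const, Finset.card_univ, Fintype.card_fin]
  have := norm_nonneg g
  have := norm_nonneg L
  gcongr
  linarith

lemma avg_iteratedFDeriv_le {n k : ℕ} {f : (Fin n → ℝ) → ℝ} (hf : ContDiff ℝ (⊤ : ℕ∞) f)
    {x : Fin n → ℝ} {B C : ℝ} (hC : ∀ A ∈ specialUnitaryGroup (Fin n) ℝ, ‖actL n A‖ ≤ C)
    (hB : ∀ A ∈ specialUnitaryGroup (Fin n) ℝ, ‖iteratedFDeriv ℝ k f (A.mulVec x)‖ ≤ B) :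
    ‖iteratedFDeriv ℝ k (avg f) x‖ ≤ B * C ^ k := by
  rw [← (avg_taylor hf).eq_iteratedFDeriv (m := k) (by exact_mod_cast le_top) x]
  refine (MeasureTheory.norm_integral_le_of_norm_le_const (C := B * C ^ k)
    (Eventually.of_forall fun h => ?_)).trans (by simp)
  exact norm_compCLM_const_le _ _ (hB _ (h⁻¹).2) (hC _ (h⁻¹).2)

lemma avg_sub_le {n : ℕ} {f : (Fin n → ℝ) → ℝ} (hf : Continuous f) {x : Fin n → ℝ} {δ : ℝ}
    (h : ∀ A ∈ specialUnitaryGroup (Fin n) ℝ, |f (A.mulVec x) - f x| ≤ δ) :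
    |f x - avg f x| ≤ δ := by
  have hi : Continuous fun h : specialUnitaryGroup (Fin n) ℝ => (h⁻¹).1 :=
    continuous_subtype_val.comp continuous_inv
  have hint : MeasureTheory.Integrable
      (fun h : specialUnitaryGroup (Fin n) ℝ => f ((h⁻¹).1.mulVec x)) (haarSO n) :=
    (hf.comp (hi.matrix_mulVec continuous_const)).integrable_of_hasCompactSupport
      (HasCompactSupport.of_compactSpace _)
  have : avg f x - f x = ∫ h, (f ((h⁻¹).1.mulVec x) - f x) ∂(haarSO n) := by
    rw [MeasureTheory.integral_sub hint (MeasureTheory.integrable_const _)]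
    simp [avg]
  rw [abs_sub_comm, this, ← Real.norm_eq_abs]
  refine (MeasureTheory.norm_integral_le_of_norm_le_const (C := δ)
    (Eventually.of_forall fun g => ?_)).trans (by simp)
  exact h _ (g⁻¹).2

/-! ### Plane rotations -/

section PlaneRotations

variable {n : ℕ} {a b : Fin n → ℝ}

/-- The infinitesimal rotation in the plane spanned by `a` and `b`, turning `a` towards `b`. -/
def planeJ (a b : Fin n → ℝ) : Matrix (Fin n) (Fin n) ℝ := vecMulVec b a - vecMulVec a b

/-- The rotation by the angle `t` in the plane spanned by the orthonormal pair `a`, `b`; it is the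
identity on the orthogonal complement. -/
noncomputable def planeRot (a b : Fin n → ℝ) (t : ℝ) : Matrix (Fin n) (Fin n) ℝ :=
  1 + (Real.cos t - 1) • (vecMulVec a a + vecMulVec b b) + Real.sin t • planeJ a b

/-- The algebraic relations between the infinitesimal rotation and the orthogonal projection onto
its plane. -/
lemma plane_relations (ha : a ⬝ᵥ a = 1) (hb : b ⬝ᵥ b = 1) (hab : a ⬝ᵥ b = 0) :
    let P := vecMulVec a a + vecMulVec b b
    let J := planeJ a b
    P * P = P ∧ P * J = J ∧ J * P = J ∧ J * J = -P := by
  have hba : b ⬝ᵥ a = 0 := by rw [dotProduct_comm, hab]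
  simp only [planeJ, mul_add, add_mul, mul_sub, sub_mul, vecMulVec_mul_vecMulVec, ha, hb, hab, hba,
    one_smul, zero_smul, vecMulVec_zero]
  refine ⟨?_, ?_, ?_, ?_⟩ <;> abel

lemma planeRot_mul (ha : a ⬝ᵥ a = 1) (hb : b ⬝ᵥ b = 1) (hab : a ⬝ᵥ b = 0) (s t : ℝ) :
    planeRot a b s * planeRot a b t = planeRot a b (s + t) := by
  obtain ⟨h1, h2, h3, h4⟩ := plane_relations ha hb hab
  rw [planeRot, planeRot, planeRot, Real.cos_add, Real.sin_add]
  generalize vecMulVec a a + vecMulVec b b = P at *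
  generalize planeJ a b = J at *
  simp only [mul_add, add_mul, one_mul, mul_one, smul_mul_assoc, mul_smul_comm,
    h1, h2, h3, h4]
  module

lemma planeRot_transpose (t : ℝ) : (planeRot a b t)ᵀ = planeRot a b (-t) := by
  simp [planeRot, planeJ, transpose_vecMulVec, Matrix.transpose_add, smul_sub]
  abel

lemma planeRot_zero : planeRot a b 0 = 1 := by simp [planeRot]

lemma planeRot_mem (ha : a ⬝ᵥ a = 1) (hb : b ⬝ᵥ b = 1) (hab : a ⬝ᵥ b = 0) (t : ℝ) :
    planeRot a b t ∈ specialUnitaryGroup (Fin n) ℝ := by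
  have horth : ∀ s, (planeRot a b s)ᵀ * planeRot a b s = 1 := fun s => by
    rw [planeRot_transpose, planeRot_mul ha hb hab, neg_add_cancel, planeRot_zero]
  refine mem_SO_iff.2 ⟨horth t, ?_⟩
  -- The determinant is a square, because the rotation is the square of the one by half the angle.
  have h1 : (planeRot a b t).det = (planeRot a b (t / 2)).det ^ 2 := by
    rw [pow_two, ← Matrix.det_mul, planeRot_mul ha hb hab, add_halves]
  have h2 := congrArg Matrix.det (horth (t / 2))
  rw [Matrix.det_mul, Matrix.det_transpose, Matrix.det_one] at h2
  rw [h1, pow_two, h2]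

lemma planeRot_hasDerivAt (ha : a ⬝ᵥ a = 1) (hb : b ⬝ᵥ b = 1) (hab : a ⬝ᵥ b = 0)
    (x : Fin n → ℝ) (t : ℝ) :
    HasDerivAt (fun s => (planeRot a b s).mulVec x)
      ((planeJ a b).mulVec ((planeRot a b t).mulVec x)) t := by
  obtain ⟨h1, h2, h3, h4⟩ := plane_relations ha hb hab
  have hJ : planeJ a b * planeRot a b t =
      (-Real.sin t) • (vecMulVec a a + vecMulVec b b) + Real.cos t • planeJ a b := by
    rw [planeRot]
    generalize vecMulVec a a + vecMulVec b b = P at *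
    generalize planeJ a b = J at *
    rw [mul_add, mul_add, mul_one, mul_smul_comm, mul_smul_comm, h3, h4]
    module
  rw [Matrix.mulVec_mulVec, hJ]
  have := ((((Real.hasDerivAt_cos t).sub_const 1).smul_const
    ((vecMulVec a a + vecMulVec b b).mulVec x)).add
    ((Real.hasDerivAt_sin t).smul_const ((planeJ a b).mulVec x))).const_add x
  rw [Matrix.add_mulVec, Matrix.smul_mulVec, Matrix.smul_mulVec]
  refine this.congr_of_eventuallyEq (Eventually.of_forall fun s => ?_)
  simp [planeRot, Matrix.add_mulVec, Matrix.smul_mulVec, add_assoc]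

lemma planeJ_mulVec (x : Fin n → ℝ) :
    (planeJ a b).mulVec x = (a ⬝ᵥ x) • b - (b ⬝ᵥ x) • a := by
  simp [planeJ, Matrix.sub_mulVec, vecMulVec_mulVec]

lemma planeRot_mulVec (x : Fin n → ℝ) (t : ℝ) :
    (planeRot a b t).mulVec x = x + (Real.cos t - 1) • ((a ⬝ᵥ x) • a + (b ⬝ᵥ x) • b) +
      Real.sin t • ((a ⬝ᵥ x) • b - (b ⬝ᵥ x) • a) := by
  simp [planeRot, planeJ_mulVec, Matrix.add_mulVec, Matrix.smul_mulVec, vecMulVec_mulVec]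

end PlaneRotations

lemma SO_dotProduct {n : ℕ} {A : Matrix (Fin n) (Fin n) ℝ}
    (hA : A ∈ specialUnitaryGroup (Fin n) ℝ) (x : Fin n → ℝ) :
    A.mulVec x ⬝ᵥ A.mulVec x = x ⬝ᵥ x := by
  rw [dotProduct_mulVec, vecMul_mulVec, (mem_SO_iff.1 hA).1, vecMul_one]

lemma dot_self_pos {n : ℕ} {x : Fin n → ℝ} (hx : x ≠ 0) : 0 < x ⬝ᵥ x := by
  have h0 : 0 ≤ x ⬝ᵥ x := Finset.sum_nonneg fun i _ => mul_self_nonneg (x i)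
  exact h0.lt_of_ne fun h => hx (dotProduct_self_eq_zero.1 h.symm)

lemma exists_unit {n : ℕ} {x : Fin n → ℝ} (hx : x ≠ 0) :
    ∃ a : Fin n → ℝ, a ⬝ᵥ a = 1 ∧ x = √(x ⬝ᵥ x) • a ∧ a = (√(x ⬝ᵥ x))⁻¹ • x := by
  have h := dot_self_pos hx
  have hs := Real.sqrt_pos.2 h
  refine ⟨(√(x ⬝ᵥ x))⁻¹ • x, ?_, ?_, rfl⟩
  · rw [smul_dotProduct, dotProduct_smul, smul_eq_mul, smul_eq_mul, ← mul_assoc, ← mul_inv,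
      Real.mul_self_sqrt h.le, inv_mul_cancel₀ h.ne']
  · rw [smul_smul, mul_inv_cancel₀ hs.ne', one_smul]

lemma exists_perp {n : ℕ} (hn : 2 ≤ n) (a : Fin n → ℝ) :
    ∃ b : Fin n → ℝ, b ⬝ᵥ b = 1 ∧ a ⬝ᵥ b = 0 := by
  let i : Fin n := ⟨0, by omega⟩
  let j : Fin n := ⟨1, by omega⟩
  have hij : i ≠ j := by simp [i, j]
  suffices h : ∃ b : Fin n → ℝ, b ≠ 0 ∧ a ⬝ᵥ b = 0 by
    obtain ⟨b, hb, hab⟩ := h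
    obtain ⟨c, hc, -, hcb⟩ := exists_unit hb
    exact ⟨c, hc, by rw [hcb, dotProduct_smul, hab, smul_zero]⟩
  by_cases h : a i = 0
  · exact ⟨Pi.single i 1, by simp, by simp [h]⟩
  · refine ⟨Pi.single j (a i) - Pi.single i (a j), fun h0 => h ?_, ?_⟩
    · simpa [hij] using congrFun h0 j
    · rw [dotProduct_sub, dotProduct_single, dotProduct_single]; ring

/-- Two vectors of equal length are carried into each other by a rotation in a plane containing
both of them. -/
lemma exists_planeRot {n : ℕ} (hn : 2 ≤ n) {x y : Fin n → ℝ} (hxy : x ⬝ᵥ x = y ⬝ᵥ y) :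
    ∃ a b : Fin n → ℝ, a ⬝ᵥ a = 1 ∧ b ⬝ᵥ b = 1 ∧ a ⬝ᵥ b = 0 ∧
      ∃ θ : ℝ, |θ| ≤ Real.pi ∧ y = (planeRot a b θ).mulVec x := by
  by_cases hx : x = 0
  · have hy : y = 0 := by
      rw [hx, zero_dotProduct] at hxy
      exact dotProduct_self_eq_zero.1 hxy.symm
    obtain ⟨a, ha, -⟩ := exists_perp hn 0
    obtain ⟨b, hb, hab⟩ := exists_perp hn a
    exact ⟨a, b, ha, hb, hab, 0, by simpa using Real.pi_pos.le, by simp [hx, hy]⟩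
  have hr : 0 < √(x ⬝ᵥ x) := Real.sqrt_pos.2 (dot_self_pos hx)
  have hr2 : √(x ⬝ᵥ x) ^ 2 = x ⬝ᵥ x := Real.sq_sqrt (dot_self_pos hx).le
  obtain ⟨a, ha, hxa, -⟩ := exists_unit hx
  set r := √(x ⬝ᵥ x)
  obtain ⟨b, hb, hab, s, hs⟩ : ∃ b : Fin n → ℝ, b ⬝ᵥ b = 1 ∧ a ⬝ᵥ b = 0 ∧
      ∃ s : ℝ, y = (a ⬝ᵥ y) • a + s • b := by
    by_cases hw : y - (a ⬝ᵥ y) • a = 0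
    · obtain ⟨b, hb, hab⟩ := exists_perp hn a
      exact ⟨b, hb, hab, 0, by rw [zero_smul, add_zero]; exact sub_eq_zero.1 hw⟩
    · obtain ⟨b, hb, hwb, hbw⟩ := exists_unit hw
      refine ⟨b, hb, ?_, _, by rw [← hwb]; abel⟩
      have h0 : a ⬝ᵥ (y - (a ⬝ᵥ y) • a) = 0 := by
        rw [dotProduct_sub, dotProduct_smul, ha, smul_eq_mul, mul_one, sub_self]
      rw [hbw, dotProduct_smul, h0, smul_zero]
  have hba : b ⬝ᵥ a = 0 := by rw [dotProduct_comm, hab]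
  set c := a ⬝ᵥ y
  have hcs : c ^ 2 + s ^ 2 = r ^ 2 := by
    rw [hr2, hxy, hs]
    simp [dotProduct_add, add_dotProduct, ha, hb, hab, hba]
    ring
  let z : ℂ := ⟨c, s⟩
  have hz : ‖z‖ = r := by
    rw [Complex.norm_def, Complex.normSq_mk, ← pow_two, ← pow_two, hcs, Real.sqrt_sq hr.le]
  have hz0 : z ≠ 0 := norm_pos_iff.1 (hz ▸ hr)
  have hcos : r * Real.cos z.arg = c := by rw [← hz]; exact Complex.norm_mul_cos_arg z
  have hsin : r * Real.sin z.arg = s := by rw [← hz]; exact Complex.norm_mul_sin_arg z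
  refine ⟨a, b, ha, hb, hab, z.arg, Complex.abs_arg_le_pi z, ?_⟩
  have hax : a ⬝ᵥ x = r := by rw [hxa, dotProduct_smul, ha]; simp
  have hbx : b ⬝ᵥ x = 0 := by rw [hxa, dotProduct_smul, hba]; simp
  rw [planeRot_mulVec, hax, hbx, hs, ← hcos, ← hsin]
  nth_rewrite 1 [hxa]
  module

lemma abs_le_of_dot_self {n : ℕ} {x : Fin n → ℝ} {r : ℝ} (hr : 0 ≤ r) (h : x ⬝ᵥ x ≤ r ^ 2)
    (i : Fin n) : |x i| ≤ r := by
  refine abs_le_of_sq_le_sq (le_trans ?_ h) hr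
  rw [pow_two]
  exact Finset.single_le_sum (f := fun i => x i * x i) (fun j _ => mul_self_nonneg (x j))
    (Finset.mem_univ i)

/-- The infinitesimal rotation `x_i ∂_j f - x_j ∂_i f`. -/
noncomputable def rotD {n : ℕ} (i j : Fin n) (f : (Fin n → ℝ) → ℝ) (x : Fin n → ℝ) : ℝ :=
  x i * fderiv ℝ f x (Pi.single j (1:ℝ)) - x j * fderiv ℝ f x (Pi.single i (1:ℝ))

/-- The derivative along an arbitrary infinitesimal plane rotation is a combination of the
derivatives along the coordinate ones. -/
lemma fderiv_planeJ {n : ℕ} (a b : Fin n → ℝ) (f : (Fin n → ℝ) → ℝ) (x : Fin n → ℝ) :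
    fderiv ℝ f x ((planeJ a b).mulVec x) = ∑ i, ∑ j, a i * b j * rotD i j f x := by
  have key : ∀ v : Fin n → ℝ, fderiv ℝ f x v = ∑ j, v j * fderiv ℝ f x (Pi.single j 1) := by
    intro v
    conv_lhs => rw [pi_eq_sum_univ' v]
    rw [map_sum]
    refine Finset.sum_congr rfl fun j _ => ?_
    rw [map_smul, smul_eq_mul]
  rw [planeJ_mulVec, map_sub, map_smul, map_smul, key a, key b]
  simp only [rotD, dotProduct, smul_eq_mul, Finset.sum_mul_sum, mul_sub, Finset.sum_sub_distrib]
  congr 1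
  · exact Finset.sum_congr rfl fun i _ => Finset.sum_congr rfl fun j _ => by ring
  · rw [Finset.sum_comm]
    exact Finset.sum_congr rfl fun i _ => Finset.sum_congr rfl fun j _ => by ring

lemma rotD_abs_le {n : ℕ} {f : (Fin n → ℝ) → ℝ} {x : Fin n → ℝ} {δ : ℝ} (hδ : 0 ≤ δ)
    (h : ∀ i j : Fin n, i < j → |rotD i j f x| ≤ δ) (i j : Fin n) : |rotD i j f x| ≤ δ := by
  rcases lt_trichotomy i j with hij | rfl | hij
  · exact h i j hij
  · simpa [rotD] using hδ
  · have := h j i hij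
    rwa [rotD, abs_sub_comm] at this

lemma eq_one_of_lt_two {n : ℕ} (hn : n < 2) {A : Matrix (Fin n) (Fin n) ℝ} (hA : A.det = 1) :
    A = 1 := by
  interval_cases n
  · exact Subsingleton.elim _ _
  · rw [Matrix.det_fin_one] at hA
    ext i j
    rw [Subsingleton.elim i 0, Subsingleton.elim j 0, hA, one_apply_eq]

/-- If all infinitesimal rotations of `f` are small on a ball, then `f` is almost constant along
rotations there: integrate along the arc of a circle from `x` to `A x`. -/
lemma sub_le_of_rotD_le {n : ℕ} {f : (Fin n → ℝ) → ℝ} (hf : Differentiable ℝ f) {x : Fin n → ℝ}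
    {δ R : ℝ} (hδ : 0 ≤ δ) (hR : ∀ B ∈ specialUnitaryGroup (Fin n) ℝ, ‖B.mulVec x‖ ≤ R)
    (h : ∀ i j : Fin n, i < j → ∀ z, ‖z‖ ≤ R → |rotD i j f z| ≤ δ)
    {A : Matrix (Fin n) (Fin n) ℝ} (hA : A ∈ specialUnitaryGroup (Fin n) ℝ) :
    |f (A.mulVec x) - f x| ≤ (n * n * Real.pi) * δ := by
  rcases lt_or_ge n 2 with hn | hn
  · rw [eq_one_of_lt_two hn (mem_SO_iff.1 hA).2, one_mulVec, sub_self, abs_zero]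
    positivity
  obtain ⟨a, b, ha, hb, hab, θ, hθ, hy⟩ := exists_planeRot hn (SO_dotProduct hA x).symm
  have hder : ∀ t, HasDerivAt (fun s => f ((planeRot a b s).mulVec x))
      (fderiv ℝ f ((planeRot a b t).mulVec x)
        ((planeJ a b).mulVec ((planeRot a b t).mulVec x))) t := fun t =>
    (hf _).hasFDerivAt.comp_hasDerivAt t (planeRot_hasDerivAt ha hb hab x t)
  have hbd : ∀ t, ‖fderiv ℝ f ((planeRot a b t).mulVec x)
      ((planeJ a b).mulVec ((planeRot a b t).mulVec x))‖ ≤ n * n * δ := by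
    intro t
    have hz := hR _ (planeRot_mem ha hb hab t)
    generalize (planeRot a b t).mulVec x = z at *
    rw [fderiv_planeJ]
    refine (norm_sum_le_of_le (n := fun _ => n * δ) _ fun i _ =>
      (norm_sum_le_of_le (n := fun _ => δ) _ fun j _ => ?_).trans ?_).trans ?_
    · have h1 := abs_le_of_dot_self zero_le_one (by rw [ha]; norm_num) i
      have h2 := abs_le_of_dot_self zero_le_one (by rw [hb]; norm_num) j
      have h3 := rotD_abs_le hδ (fun i j hij => h i j hij z hz) i j
      rw [Real.norm_eq_abs, abs_mul, abs_mul]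
      calc |a i| * |b j| * |rotD i j f z| ≤ 1 * 1 * δ := by gcongr
        _ = δ := by ring
    · simp
    · simp [mul_assoc]
  have hmv := convex_univ.norm_image_sub_le_of_norm_hasDerivWithin_le (x := 0) (y := θ)
    (fun t _ => (hder t).hasDerivWithinAt) (fun t _ => hbd t) (mem_univ _) (mem_univ _)
  rw [planeRot_zero, Matrix.one_mulVec, ← hy, Real.norm_eq_abs, sub_zero, Real.norm_eq_abs] at hmv
  refine hmv.trans ?_
  calc n * n * δ * |θ| ≤ n * n * δ * Real.pi := by gcongr
    _ = _ := by ring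

/-- An approximate rotation sends a vector close to its image under an exact one. -/
lemma exists_SO_near {n : ℕ} {A : Matrix (Fin n) (Fin n) ℝ} {η R : ℝ} (hη : 0 ≤ η)
    (hA : ∀ i j, |(Aᵀ * A - 1) i j| ≤ η ^ 2) (hdet : |A.det - 1| ≤ η) {x : Fin n → ℝ}
    (hx : ‖x‖ ≤ R) :
    ∃ B ∈ specialUnitaryGroup (Fin n) ℝ, ‖B.mulVec x - A.mulVec x‖ ≤ (n + 1) * R * η := by
  have hR : 0 ≤ R := (norm_nonneg x).trans hx
  rcases lt_or_ge n 2 with hn | hn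
  · refine ⟨1, one_mem _, ?_⟩
    rw [one_mulVec]
    interval_cases n
    · rw [Subsingleton.elim (x - A.mulVec x) 0, norm_zero]
      positivity
    · have hAx : x - A.mulVec x = (1 - A 0 0) • x := by
        ext i
        rw [Subsingleton.elim i 0]
        simp [mulVec, dotProduct]
        ring
      rw [Matrix.det_fin_one, abs_sub_comm] at hdet
      rw [hAx, norm_smul, Real.norm_eq_abs]
      calc |1 - A 0 0| * ‖x‖ ≤ η * R := by gcongr
        _ ≤ _ := by push_cast; nlinarith [mul_nonneg hη hR]
  have hdot : |x ⬝ᵥ x - A.mulVec x ⬝ᵥ A.mulVec x| ≤ (n * R * η) ^ 2 := by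
    have h1 : A.mulVec x ⬝ᵥ A.mulVec x - x ⬝ᵥ x = x ⬝ᵥ (Aᵀ * A - 1).mulVec x := by
      rw [dotProduct_mulVec, vecMul_mulVec, sub_mulVec, dotProduct_sub, one_mulVec,
        dotProduct_mulVec x]
    have hxi : ∀ i, |x i| ≤ R := fun i => (norm_le_pi_norm x i).trans hx
    rw [abs_sub_comm, h1, ← Real.norm_eq_abs, dotProduct]
    refine (norm_sum_le_of_le (n := fun _ => R * (n * (η ^ 2 * R))) _ fun i _ => ?_).trans ?_
    · rw [norm_mul]
      refine mul_le_mul (hxi i) ?_ (norm_nonneg _) hR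
      rw [mulVec, dotProduct]
      refine (norm_sum_le_of_le (n := fun _ => η ^ 2 * R) _ fun j _ => ?_).trans ?_
      · rw [norm_mul]
        exact mul_le_mul (hA i j) (hxi j) (norm_nonneg _) (sq_nonneg _)
      · simp
    · rw [Finset.sum_const, Finset.card_univ, Fintype.card_fin, nsmul_eq_mul]
      exact le_of_eq (by ring)
  set y := A.mulVec x with hy
  obtain ⟨z, hz, hzy⟩ : ∃ z : Fin n → ℝ, x ⬝ᵥ x = z ⬝ᵥ z ∧ ‖z - y‖ ≤ n * R * η := by
    have hB : 0 ≤ n * R * η := by positivity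
    by_cases hy0 : y = 0
    · refine ⟨x, rfl, (pi_norm_le_iff_of_nonneg hB).2 fun i => abs_le_of_dot_self hB ?_ i⟩
      rw [hy0, zero_dotProduct, sub_zero] at hdot
      rw [hy0, sub_zero]
      exact (le_abs_self _).trans hdot
    · -- Rescale `y` to the length of `x`; the error is the difference of the two lengths.
      have hx0 : 0 ≤ x ⬝ᵥ x := Finset.sum_nonneg fun i _ => mul_self_nonneg (x i)
      obtain ⟨c, hc, hyc, -⟩ := exists_unit hy0
      have hr := Real.sq_sqrt hx0
      have hs := Real.sq_sqrt (dot_self_pos hy0).le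
      have hr0 := Real.sqrt_nonneg (x ⬝ᵥ x)
      have hs0 := Real.sqrt_nonneg (y ⬝ᵥ y)
      set r := √(x ⬝ᵥ x)
      set s := √(y ⬝ᵥ y)
      refine ⟨r • c, by rw [smul_dotProduct, dotProduct_smul, hc, ← hr]; simp [pow_two],
        (pi_norm_le_iff_of_nonneg hB).2 fun i => abs_le_of_dot_self hB ?_ i⟩
      rw [hyc, ← sub_smul, smul_dotProduct, dotProduct_smul, hc]
      refine le_trans ?_ hdot
      rw [← hr, ← hs, sq_sub_sq, abs_mul, abs_of_nonneg (add_nonneg hr0 hs0), smul_eq_mul,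
        smul_eq_mul, mul_one, ← abs_mul_abs_self]
      refine mul_le_mul_of_nonneg_right (abs_le.2 ⟨?_, ?_⟩) (abs_nonneg _) <;> linarith
  obtain ⟨a, b, ha, hb, hab, θ, -, hθ⟩ := exists_planeRot hn hz
  refine ⟨_, planeRot_mem ha hb hab θ, ?_⟩
  rw [← hθ]
  refine hzy.trans ?_
  gcongr
  linarith

/-! ### Asymptotic scales -/

lemma ev_iff {P : ℝ → Prop} : (∃ ε₀ > (0:ℝ), ∀ ε : ℝ, 0 < ε → ε < ε₀ → P ε) ↔
    ∀ᶠ ε in 𝓝[>] (0:ℝ), P ε := by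
  rw [(nhdsGT_basis (0:ℝ)).eventually_iff]
  exact exists_congr fun _ => and_congr_right fun _ =>
    ⟨fun h ε hε => h ε hε.1 hε.2, fun h ε h1 h2 => h ⟨h1, h2⟩⟩

lemma ev_pos : ∀ᶠ ε in 𝓝[>] (0:ℝ), 0 < ε := self_mem_nhdsWithin

lemma ev_mul_le_one (C : ℝ) : ∀ᶠ ε in 𝓝[>] (0:ℝ), C * ε ≤ 1 := by
  have h : Tendsto (fun ε : ℝ => C * ε) (𝓝[>] 0) (𝓝 (C * 0)) :=
    (tendsto_id.mono_left nhdsWithin_le_nhds).const_mul C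
  rw [mul_zero] at h
  exact (h.eventually (gt_mem_nhds one_pos)).mono fun _ => le_of_lt

lemma ev_le_one : ∀ᶠ ε in 𝓝[>] (0:ℝ), ε ≤ 1 := by simpa using ev_mul_le_one 1

lemma ev_Ioc : ∀ᶠ ε in 𝓝[>] (0:ℝ), ε ∈ Ioc (0:ℝ) 1 := ev_pos.and ev_le_one

lemma ev_const_mul_pow (C : ℝ) (m : ℕ) : ∀ᶠ ε in 𝓝[>] (0:ℝ), C * ε ^ (m + 1) ≤ ε ^ m := by
  filter_upwards [ev_pos, ev_mul_le_one C] with ε h h1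
  calc C * ε ^ (m + 1) = (C * ε) * ε ^ m := by ring
    _ ≤ 1 * ε ^ m := by gcongr
    _ = _ := one_mul _

lemma ev_const_mul_inv_pow (C : ℝ) (p : ℕ) :
    ∀ᶠ ε in 𝓝[>] (0:ℝ), C * ε⁻¹ ^ p ≤ ε⁻¹ ^ (p + 1) := by
  filter_upwards [ev_pos, ev_mul_le_one C] with ε h h1
  calc C * ε⁻¹ ^ p = (C * ε) * ε⁻¹ ^ (p + 1) := by
        have h2 : ε * ε⁻¹ = 1 := mul_inv_cancel₀ h.ne'
        linear_combination (-(C * ε⁻¹ ^ p)) * h2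
    _ ≤ 1 * ε⁻¹ ^ (p + 1) := by gcongr
    _ = _ := one_mul _

lemma ev_inv_pow_mono {p q : ℕ} (h : p ≤ q) : ∀ᶠ ε in 𝓝[>] (0:ℝ), ε⁻¹ ^ p ≤ ε⁻¹ ^ q := by
  filter_upwards [ev_pos, ev_le_one] with ε h0 h1
  exact pow_le_pow_right₀ ((one_le_inv₀ h0).2 h1) h

/-- A quantity is `O(ε^m)` for every `m` exactly when it is eventually at most `ε^m` for every `m`:
the constant is absorbed by one extra power of `ε`. -/
lemma rapid_iff {P : ℝ → ℝ → Prop} (hP : ∀ ε r s, r ≤ s → P ε r → P ε s) :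
    (∀ m : ℕ, ∃ C > (0:ℝ), ∃ ε₀ > (0:ℝ), ∀ ε : ℝ, 0 < ε → ε < ε₀ → P ε (C * ε ^ m)) ↔
      ∀ m : ℕ, ∀ᶠ ε in 𝓝[>] (0:ℝ), P ε (ε ^ m) := by
  refine ⟨fun h m => ?_, fun h m => ⟨1, one_pos, ev_iff.2 ((h m).mono fun ε hε => ?_)⟩⟩
  · obtain ⟨C, -, h⟩ := h (m + 1)
    filter_upwards [ev_iff.1 h, ev_const_mul_pow C m] with ε h1 h2
    exact hP _ _ _ h2 h1
  · rwa [one_mul]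

section Nets

variable {n : ℕ} {u v : ℝ → (Fin n → ℝ) → ℝ}

lemma moderate_iff : ModerateF u ↔ ∀ K : Set (Fin n → ℝ), IsCompact K → ∀ k : ℕ, ∃ p : ℕ,
    ∀ᶠ ε in 𝓝[>] (0:ℝ), ∀ x ∈ K, ‖iteratedFDeriv ℝ k (u ε) x‖ ≤ ε⁻¹ ^ p := by
  refine forall_congr' fun K => forall_congr' fun hK => forall_congr' fun k => ⟨?_, ?_⟩
  · rintro ⟨p, C, -, h⟩
    refine ⟨p + 1, ?_⟩
    filter_upwards [ev_iff.1 h, ev_const_mul_inv_pow C p] with ε h1 h2 x hx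
    refine (h1 x hx).trans ?_
    rwa [div_eq_mul_inv, ← inv_pow]
  · rintro ⟨p, h⟩
    refine ⟨p, 1, one_pos, ev_iff.2 (h.mono fun ε h1 x hx => ?_)⟩
    rw [one_div, ← inv_pow]
    exact h1 x hx

lemma negligible_iff : NegligibleF u ↔ ModerateF u ∧ ∀ K : Set (Fin n → ℝ), IsCompact K →
    ∀ m : ℕ, ∀ᶠ ε in 𝓝[>] (0:ℝ), ∀ x ∈ K, |u ε x| ≤ ε ^ m :=
  and_congr_right fun _ => forall_congr' fun K => forall_congr' fun _ =>
    rapid_iff (P := fun ε r => ∀ x ∈ K, |u ε x| ≤ r) fun _ _ _ hrs h x hx => (h x hx).trans hrs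

/-- A single exponent serves for all derivatives up to a given order. -/
lemma ModerateF.uniform (hu : ModerateF u) {K : Set (Fin n → ℝ)} (hK : IsCompact K) (k : ℕ) :
    ∃ p : ℕ, ∀ᶠ ε in 𝓝[>] (0:ℝ), ∀ i ∈ Finset.range (k + 1), ∀ x ∈ K,
      ‖iteratedFDeriv ℝ i (u ε) x‖ ≤ ε⁻¹ ^ p := by
  choose p hp using fun i => moderate_iff.1 hu K hK i
  refine ⟨∑ i ∈ Finset.range (k + 1), p i, (Filter.eventually_all_finset _).2 fun i hi => ?_⟩
  filter_upwards [hp i, ev_inv_pow_mono (Finset.single_le_sum (fun j _ => Nat.zero_le (p j)) hi)]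
    with ε h1 h2 x hx
  exact (h1 x hx).trans h2

/-- Smoothness of the members of a net for all small parameters. -/
def EvSmooth (u : ℝ → (Fin n → ℝ) → ℝ) : Prop :=
  ∀ᶠ ε in 𝓝[>] (0:ℝ), ContDiff ℝ (⊤ : ℕ∞) (u ε)

lemma ModerateF.sub (hu : ModerateF u) (hv : ModerateF v) (hus : EvSmooth u) (hvs : EvSmooth v) :
    ModerateF (fun ε x => u ε x - v ε x) := by
  refine moderate_iff.2 fun K hK k => ?_
  obtain ⟨p, hp⟩ := moderate_iff.1 hu K hK k
  obtain ⟨q, hq⟩ := moderate_iff.1 hv K hK k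
  refine ⟨max p q + 1, ?_⟩
  filter_upwards [hp, hq, hus, hvs, ev_inv_pow_mono (le_max_left p q),
    ev_inv_pow_mono (le_max_right p q), ev_const_mul_inv_pow 2 (max p q)]
    with ε h1 h2 h3 h4 h5 h6 h7 x hx
  have hk : (k : WithTop ℕ∞) ≤ ((⊤ : ℕ∞) : WithTop ℕ∞) := by exact_mod_cast le_top
  have h8 := iteratedFDeriv_sub_apply (x := x) (h3.of_le hk).contDiffAt (h4.of_le hk).contDiffAt
  change ‖iteratedFDeriv ℝ k (u ε - v ε) x‖ ≤ _
  rw [h8]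
  linarith [norm_sub_le (iteratedFDeriv ℝ k (u ε) x) (iteratedFDeriv ℝ k (v ε) x), h1 x hx, h2 x hx]

lemma ModerateF.mul (hu : ModerateF u) (hv : ModerateF v) (hus : EvSmooth u) (hvs : EvSmooth v) :
    ModerateF (fun ε x => u ε x * v ε x) := by
  refine moderate_iff.2 fun K hK k => ?_
  obtain ⟨p, hp⟩ := hu.uniform hK k
  obtain ⟨q, hq⟩ := hv.uniform hK k
  refine ⟨p + q + 1, ?_⟩
  filter_upwards [hp, hq, hus, hvs, ev_const_mul_inv_pow (2 ^ k) (p + q), ev_pos]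
    with ε h1 h2 h3 h4 h5 h6 x hx
  refine (norm_iteratedFDeriv_mul_le h3 h4 x (n := k) (by exact_mod_cast le_top)).trans ?_
  refine le_trans (Finset.sum_le_sum (g := fun i => (k.choose i : ℝ) * ε⁻¹ ^ (p + q))
    fun i hi => ?_) ?_
  · rw [pow_add, ← mul_assoc]
    have := h1 i hi x hx
    have := h2 (k - i) (Finset.mem_range.2 (by omega)) x hx
    gcongr
  · rw [← Finset.sum_mul, ← Nat.cast_sum, Nat.sum_range_choose]
    exact_mod_cast h5

lemma ModerateF.of_const {w : (Fin n → ℝ) → ℝ} (hw : ContDiff ℝ (⊤ : ℕ∞) w) :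
    ModerateF (fun _ : ℝ => w) := by
  refine moderate_iff.2 fun K hK k => ⟨1, ?_⟩
  obtain ⟨C, hC⟩ := hK.exists_bound_of_continuousOn
    (hw.continuous_iteratedFDeriv (m := k) (by exact_mod_cast le_top)).continuousOn
  filter_upwards [ev_const_mul_inv_pow C 0] with ε h x hx
  exact (hC x hx).trans (by simpa using h)

lemma ModerateF.fderiv (hu : ModerateF u) (hus : EvSmooth u) (w : Fin n → ℝ) :
    ModerateF (fun ε x => fderiv ℝ (u ε) x w) := by
  refine moderate_iff.2 fun K hK k => ?_
  obtain ⟨p, hp⟩ := moderate_iff.1 hu K hK (k + 1)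
  refine ⟨p + 1, ?_⟩
  filter_upwards [hp, hus, ev_const_mul_inv_pow ‖w‖ p] with ε h1 h2 h3 x hx
  have h4 : ContDiff ℝ (⊤ : ℕ∞) (_root_.fderiv ℝ (u ε)) :=
    h2.fderiv_right (by exact_mod_cast le_top)
  refine (norm_iteratedFDeriv_clm_apply_const h4.contDiffAt (n := k)
    (by exact_mod_cast le_top)).trans ?_
  rw [norm_iteratedFDeriv_fderiv]
  exact (mul_le_mul_of_nonneg_left (h1 x hx) (norm_nonneg _)).trans h3

lemma EvSmooth.fderiv (hus : EvSmooth u) (w : Fin n → ℝ) :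
    EvSmooth (fun ε x => fderiv ℝ (u ε) x w) :=
  hus.mono fun _ h => (h.fderiv_right (m := (⊤ : ℕ∞)) (by exact_mod_cast le_top)).clm_apply
    contDiff_const

lemma EvSmooth.mul (hus : EvSmooth u) (hvs : EvSmooth v) : EvSmooth (fun ε x => u ε x * v ε x) :=
  (hus.and hvs).mono fun _ h => h.1.mul h.2

lemma EvSmooth.sub (hus : EvSmooth u) (hvs : EvSmooth v) : EvSmooth (fun ε x => u ε x - v ε x) :=
  (hus.and hvs).mono fun _ h => h.1.sub h.2

lemma coord_contDiff (i : Fin n) : ContDiff ℝ (⊤ : ℕ∞) (fun x : Fin n → ℝ => x i) :=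
  contDiff_apply ℝ ℝ i

lemma EvSmooth.rotD (hus : EvSmooth u) (i j : Fin n) : EvSmooth (fun ε => rotD i j (u ε)) :=
  have hc : ∀ i : Fin n, EvSmooth (fun _ x => x i) := fun i =>
    Eventually.of_forall fun _ => coord_contDiff i
  ((hc i).mul (hus.fderiv _)).sub ((hc j).mul (hus.fderiv _))

lemma ModerateF.rotD (hu : ModerateF u) (hus : EvSmooth u) (i j : Fin n) :
    ModerateF (fun ε => rotD i j (u ε)) :=
  have hc : ∀ i : Fin n, EvSmooth (fun _ x => x i) := fun i =>
    Eventually.of_forall fun _ => coord_contDiff i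
  ((ModerateF.of_const (coord_contDiff i)).mul (hu.fderiv hus _) (hc i) (hus.fderiv _)).sub
    ((ModerateF.of_const (coord_contDiff j)).mul (hu.fderiv hus _) (hc j) (hus.fderiv _))
    ((hc i).mul (hus.fderiv _)) ((hc j).mul (hus.fderiv _))

lemma exists_ball {K : Set (Fin n → ℝ)} (hK : IsCompact K) : ∃ R : ℝ, 0 < R ∧ ∀ x ∈ K, ‖x‖ ≤ R := by
  obtain ⟨R, hR, h⟩ := hK.isBounded.subset_closedBall_lt 0 0
  exact ⟨R, hR, fun x hx => by simpa using h hx⟩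

lemma norm_mulVec_le {A : Matrix (Fin n) (Fin n) ℝ} {x : Fin n → ℝ} {C R : ℝ}
    (hA : ‖actL n A‖ ≤ C) (hx : ‖x‖ ≤ R) : ‖A.mulVec x‖ ≤ C * R :=
  ((actL n A).le_opNorm x).trans
    (mul_le_mul hA hx (norm_nonneg _) ((norm_nonneg _).trans hA))

lemma ModerateF.comp_mulVec (hu : ModerateF u) (hus : EvSmooth u)
    {A : ℝ → Matrix (Fin n) (Fin n) ℝ} {C : ℝ} (hA : ∀ᶠ ε in 𝓝[>] (0:ℝ), ‖actL n (A ε)‖ ≤ C) :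
    ModerateF (fun ε x => u ε ((A ε).mulVec x)) := by
  refine moderate_iff.2 fun K hK k => ?_
  obtain ⟨R, hR, hKR⟩ := exists_ball hK
  obtain ⟨p, hp⟩ := moderate_iff.1 hu _ (isCompact_closedBall 0 (C * R)) k
  refine ⟨p + 1, ?_⟩
  filter_upwards [hp, hus, hA, ev_const_mul_inv_pow (C ^ k) p] with ε h1 h2 h3 h4 x hx
  have h5 := (actL n (A ε)).iteratedFDeriv_comp_right h2 x (i := k) (by exact_mod_cast le_top)
  change ‖iteratedFDeriv ℝ k (u ε ∘ actL n (A ε)) x‖ ≤ _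
  rw [h5]
  refine (norm_compCLM_const_le _ _ (h1 _ ?_) h3).trans (by linarith)
  simpa using norm_mulVec_le h3 (hKR x hx)

lemma EvSmooth.comp_mulVec (hus : EvSmooth u) (A : ℝ → Matrix (Fin n) (Fin n) ℝ) :
    EvSmooth (fun ε x => u ε ((A ε).mulVec x)) :=
  hus.mono fun ε h => h.comp (actL n (A ε)).contDiff

/-- Moderate nets are Lipschitz on balls, with moderate constants. -/
lemma ModerateF.lipschitz (hu : ModerateF u) (hus : EvSmooth u) (R : ℝ) :
    ∃ p : ℕ, ∀ᶠ ε in 𝓝[>] (0:ℝ), ∀ x y : Fin n → ℝ, ‖x‖ ≤ R → ‖y‖ ≤ R →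
      |u ε y - u ε x| ≤ ε⁻¹ ^ p * ‖y - x‖ := by
  obtain ⟨p, hp⟩ := moderate_iff.1 hu _ (isCompact_closedBall 0 R) 1
  refine ⟨p, ?_⟩
  filter_upwards [hp, hus] with ε h1 h2 x y hx hy
  refine (convex_closedBall 0 R).norm_image_sub_le_of_norm_fderiv_le (𝕜 := ℝ)
    (fun z _ => (h2.differentiable (by simp)) z) (fun z hz => ?_) (by simpa using hx)
    (by simpa using hy)
  rw [← norm_iteratedFDeriv_one]
  exact h1 z hz

/-! ### Generalized rotations -/

lemma GenRotation.of_SO {A : ℝ → Matrix (Fin n) (Fin n) ℝ}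
    (hA : ∀ ε, A ε ∈ specialUnitaryGroup (Fin n) ℝ) : GenRotation A := by
  refine ⟨fun i j => ⟨0, 1, one_pos, 1, one_pos, fun ε _ _ => ?_⟩,
    fun i j m => ⟨1, one_pos, 1, one_pos, fun ε h _ => ?_⟩,
    fun m => ⟨1, one_pos, 1, one_pos, fun ε h _ => ?_⟩⟩
  · simpa using entry_norm_bound_of_unitary (hA ε).1 i j
  · rw [(mem_SO_iff.1 (hA ε)).1]
    simp [h.le]
  · rw [(mem_SO_iff.1 (hA ε)).2]
    simp [h.le]

lemma GenRotation.small {A : ℝ → Matrix (Fin n) (Fin n) ℝ} (hA : GenRotation A) (m : ℕ) :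
    ∀ᶠ ε in 𝓝[>] (0:ℝ), (∀ i j, |((A ε)ᵀ * A ε - 1) i j| ≤ ε ^ m) ∧ |(A ε).det - 1| ≤ ε ^ m := by
  refine Filter.Eventually.and ?_ ?_
  · simp only [Filter.eventually_all]
    exact fun i j => (rapid_iff (P := fun ε r => |((A ε)ᵀ * A ε - 1) i j| ≤ r)
      fun _ _ _ hrs h => h.trans hrs).1 (hA.2.1 i j) m
  · exact (rapid_iff (P := fun ε r => |(A ε).det - 1| ≤ r)
      fun _ _ _ hrs h => h.trans hrs).1 hA.2.2 m

/-- Generalized rotations are bounded: a column of `A` has squared length close to one. -/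
lemma GenRotation.bounded {A : ℝ → Matrix (Fin n) (Fin n) ℝ} (hA : GenRotation A) :
    ∃ C : ℝ, 1 ≤ C ∧ ∀ᶠ ε in 𝓝[>] (0:ℝ), ‖actL n (A ε)‖ ≤ C := by
  have hK : IsCompact (Set.univ.pi fun _ => Set.univ.pi fun _ => Set.Icc (-2) 2 :
      Set (Matrix (Fin n) (Fin n) ℝ)) :=
    isCompact_univ_pi fun _ => isCompact_univ_pi fun _ => isCompact_Icc
  obtain ⟨C, hC⟩ := hK.exists_bound_of_continuousOn (actL_continuous n).continuousOn
  refine ⟨max C 1, le_max_right _ _, ?_⟩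
  filter_upwards [hA.small 0] with ε h
  refine (hC _ fun i _ j _ => abs_le.1 ?_).trans (le_max_left _ _)
  have h1 : ((A ε)ᵀ * A ε - 1) j j = (fun k => A ε k j) ⬝ᵥ (fun k => A ε k j) - 1 := by
    simp [Matrix.mul_apply, dotProduct]
  have h2 := (abs_le.1 (h.1 j j)).2
  rw [h1, pow_zero] at h2
  exact abs_le_of_dot_self (x := fun k => A ε k j) (by norm_num) (by linarith) i

end Nets

/-! ### The three implications -/

section Main

variable {n : ℕ} {u : ℝ → (Fin n → ℝ) → ℝ}

/-- Invariance under the generalized rotations by the angles `ε ^ q` in the coordinate planes gives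
negligible infinitesimal rotations: the difference quotient is negligible, and it approximates
the derivative to any order once `q` is large. -/
lemma rotD_negligible (hus : EvSmooth u) (hu : ModerateF u)
    (h : ∀ A : ℝ → Matrix (Fin n) (Fin n) ℝ, GenRotation A →
      NegligibleF (fun ε x => u ε ((A ε).mulVec x) - u ε x)) {i j : Fin n} (hij : i ≠ j) :
    NegligibleF (fun ε => rotD i j (u ε)) := by
  refine negligible_iff.2 ⟨hu.rotD hus i j, fun K hK m => ?_⟩
  obtain ⟨R, hR, hKR⟩ := exists_ball hK
  obtain ⟨C, hC1, hC⟩ := SO_bound n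
  obtain ⟨p, hp⟩ := (hu.rotD hus i j).lipschitz (hus.rotD i j) (C * R)
  let a : Fin n → ℝ := Pi.single i 1
  let b : Fin n → ℝ := Pi.single j 1
  have ha : a ⬝ᵥ a = 1 := by simp [a]
  have hb : b ⬝ᵥ b = 1 := by simp [b]
  have hab : a ⬝ᵥ b = 0 := by simp [a, b, hij]
  let q := m + 1 + 1 + p
  let D := ‖actL n (planeJ a b)‖
  have hneg := (negligible_iff.1 (h (fun ε => planeRot a b (ε ^ q))
    (GenRotation.of_SO fun ε => planeRot_mem ha hb hab _))).2 K hK (m + 1 + q)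
  filter_upwards [hneg, hp, hus, ev_pos, ev_const_mul_pow (D * (C * R)) (m + 1),
    ev_const_mul_pow 2 m] with ε h1 h2 h3 h4 h5 h6 x hx
  have hq : 0 < ε ^ q := pow_pos h4 q
  have hin : ∀ t, ‖(planeRot a b t).mulVec x‖ ≤ C * R := fun t =>
    norm_mulVec_le (hC _ (planeRot_mem ha hb hab t)) (hKR x hx)
  have hxin : ‖x‖ ≤ C * R := (hKR x hx).trans (le_mul_of_one_le_left hR.le hC1)
  have hder : ∀ t, HasDerivAt (fun s => u ε ((planeRot a b s).mulVec x))
      (rotD i j (u ε) ((planeRot a b t).mulVec x)) t := fun t => by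
    have := ((h3.differentiable (by simp)) _).hasFDerivAt.comp_hasDerivAt t
      (planeRot_hasDerivAt ha hb hab x t)
    rw [planeJ_mulVec, map_sub, map_smul, map_smul] at this
    exact this.congr_deriv (by simp [rotD, a, b])
  obtain ⟨c, hc, hceq⟩ := exists_hasDerivAt_eq_slope _ _ hq
    (fun t _ => (hder t).continuousAt.continuousWithinAt) (fun t _ => hder t)
  have e1 : |rotD i j (u ε) ((planeRot a b c).mulVec x)| ≤ ε ^ (m + 1) := by
    rw [hceq, planeRot_zero, one_mulVec, sub_zero, abs_div, abs_of_pos hq, div_le_iff₀ hq,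
      ← pow_add]
    exact h1 x hx
  have e2 : ‖(planeRot a b c).mulVec x - x‖ ≤ D * (C * R) * ε ^ q := by
    have := convex_univ.norm_image_sub_le_of_norm_hasDerivWithin_le (x := 0) (y := c)
      (C := D * (C * R)) (fun t _ => (planeRot_hasDerivAt ha hb hab x t).hasDerivWithinAt)
      (fun t _ => norm_mulVec_le le_rfl (hin t)) (mem_univ _) (mem_univ _)
    rw [planeRot_zero, one_mulVec, sub_zero, Real.norm_eq_abs, abs_of_pos hc.1] at this
    refine this.trans ?_
    have := hc.2.le
    gcongr
  have e3 := h2 _ _ (hin c) hxin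
  have e4 : ε⁻¹ ^ p * ‖x - (planeRot a b c).mulVec x‖ ≤ ε ^ (m + 1) := by
    have hp1 : ε⁻¹ ^ p * ε ^ p = 1 := by rw [← mul_pow, inv_mul_cancel₀ h4.ne', one_pow]
    rw [norm_sub_rev]
    calc _ ≤ ε⁻¹ ^ p * (D * (C * R) * ε ^ q) := by gcongr
      _ = D * (C * R) * ε ^ (m + 1 + 1) := by
        simp only [q, pow_add ε (m + 1 + 1) p]
        linear_combination (D * (C * R) * ε ^ (m + 1 + 1)) * hp1
      _ ≤ _ := h5
  have e5 := abs_sub_abs_le_abs_sub (rotD i j (u ε) x)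
    (rotD i j (u ε) ((planeRot a b c).mulVec x))
  linarith

/-- The averages over rotations form the required representative. -/
lemma exists_invariant (hus : ∀ ε ∈ Set.Ioc (0:ℝ) 1, ContDiff ℝ (⊤ : ℕ∞) (u ε))
    (hu : ModerateF u) (h : ∀ i j : Fin n, i < j → NegligibleF (fun ε => rotD i j (u ε))) :
    ∃ u' : ℝ → (Fin n → ℝ) → ℝ,
      (∀ ε : ℝ, ContDiff ℝ (⊤ : ℕ∞) (u' ε)) ∧
      (∀ (ε : ℝ) (A : Matrix (Fin n) (Fin n) ℝ), Aᵀ * A = 1 → A.det = 1 →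
        ∀ x : Fin n → ℝ, u' ε (A.mulVec x) = u' ε x) ∧
      NegligibleF (fun ε x => u ε x - u' ε x) := by
  classical
  let u' : ℝ → (Fin n → ℝ) → ℝ := fun ε => if ε ∈ Ioc (0:ℝ) 1 then avg (u ε) else 0
  have hu'1 : ∀ ε ∈ Ioc (0:ℝ) 1, u' ε = avg (u ε) := fun ε hε => if_pos hε
  have hu'0 : ∀ ε ∉ Ioc (0:ℝ) 1, u' ε = 0 := fun ε hε => if_neg hε
  have hsm : ∀ ε, ContDiff ℝ (⊤ : ℕ∞) (u' ε) := fun ε => by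
    by_cases hε : ε ∈ Ioc (0:ℝ) 1
    · rw [hu'1 ε hε]; exact avg_contDiff (hus ε hε)
    · rw [hu'0 ε hε]; exact contDiff_const
  have hev : EvSmooth u := ev_Ioc.mono hus
  obtain ⟨C, hC1, hC⟩ := SO_bound n
  refine ⟨u', hsm, fun ε A hA hdet x => ?_, negligible_iff.2 ⟨?_, fun K hK m => ?_⟩⟩
  · by_cases hε : ε ∈ Ioc (0:ℝ) 1
    · rw [hu'1 ε hε]; exact avg_invariant _ (mem_SO_iff.2 ⟨hA, hdet⟩) x
    · rw [hu'0 ε hε]; rfl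
  · refine hu.sub (moderate_iff.2 fun K hK k => ?_) hev (Eventually.of_forall hsm)
    obtain ⟨R, hR, hKR⟩ := exists_ball hK
    obtain ⟨p, hp⟩ := moderate_iff.1 hu _ (isCompact_closedBall 0 (C * R)) k
    refine ⟨p + 1, ?_⟩
    filter_upwards [hp, ev_Ioc, ev_const_mul_inv_pow (C ^ k) p] with ε h1 h2 h3 x hx
    rw [hu'1 ε h2]
    refine (avg_iteratedFDeriv_le (hus ε h2) hC fun A hA => h1 _ ?_).trans (by linarith)
    simpa using norm_mulVec_le (hC A hA) (hKR x hx)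
  · obtain ⟨R, hR, hKR⟩ := exists_ball hK
    have hrot : ∀ᶠ ε in 𝓝[>] (0:ℝ), ∀ i j : Fin n, i < j → ∀ z, ‖z‖ ≤ C * R →
        |rotD i j (u ε) z| ≤ ε ^ (m + 1) := by
      simp only [Filter.eventually_all]
      intro i j hij
      filter_upwards [(negligible_iff.1 (h i j hij)).2 _ (isCompact_closedBall 0 (C * R)) (m + 1)]
        with ε hε z hz
      exact hε z (by simpa using hz)
    filter_upwards [hrot, ev_Ioc, ev_const_mul_pow (n * n * Real.pi) m] with ε h1 h2 h3 x hx
    rw [hu'1 ε h2]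
    refine (avg_sub_le (hus ε h2).continuous fun A hA => ?_).trans h3
    exact sub_le_of_rotD_le ((hus ε h2).differentiable (by simp)) (pow_nonneg h2.1.le _)
      (fun B hB => norm_mulVec_le (hC B hB) (hKR x hx)) h1 hA

/-- A net with an invariant representative is invariant under generalized rotations `A`: near each
`A x` lies the image of `x` under an exact rotation, and moderateness controls the difference
between the values at the two points. -/
lemma invariant_of_representative (hus : EvSmooth u) (hu : ModerateF u)
    {u' : ℝ → (Fin n → ℝ) → ℝ}
    (hinv : ∀ (ε : ℝ) (A : Matrix (Fin n) (Fin n) ℝ), Aᵀ * A = 1 → A.det = 1 →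
      ∀ x : Fin n → ℝ, u' ε (A.mulVec x) = u' ε x)
    (hneg : NegligibleF (fun ε x => u ε x - u' ε x))
    {A : ℝ → Matrix (Fin n) (Fin n) ℝ} (hA : GenRotation A) :
    NegligibleF (fun ε x => u ε ((A ε).mulVec x) - u ε x) := by
  obtain ⟨C, hC1, hC⟩ := hA.bounded
  obtain ⟨C', hC'1, hC'⟩ := SO_bound n
  refine negligible_iff.2 ⟨(hu.comp_mulVec hus hC).sub hu (hus.comp_mulVec A) hus,
    fun K hK m => ?_⟩
  obtain ⟨R, hR, hKR⟩ := exists_ball hK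
  obtain ⟨p, hp⟩ := hu.lipschitz hus (max C C' * R)
  let q := m + 1 + 1 + p
  filter_upwards [hp, hC, hA.small (q * 2), hA.small q, ev_Ioc,
    (negligible_iff.1 hneg).2 _ (isCompact_closedBall 0 (max C C' * R)) (m + 1),
    ev_const_mul_pow ((n + 1) * R) (m + 1), ev_const_mul_pow 3 m]
    with ε h1 h2 h3 h4 h5 h6 h7 h8 x hx
  have hε := h5.1
  obtain ⟨B, hB, hBA⟩ := exists_SO_near (pow_nonneg hε.le q)
    (fun i j => by rw [← pow_mul]; exact h3.1 i j) h4.2 (hKR x hx)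
  have hAin : ‖(A ε).mulVec x‖ ≤ max C C' * R :=
    norm_mulVec_le (h2.trans (le_max_left _ _)) (hKR x hx)
  have hBin : ‖B.mulVec x‖ ≤ max C C' * R :=
    norm_mulVec_le ((hC' B hB).trans (le_max_right _ _)) (hKR x hx)
  have hxin : ‖x‖ ≤ max C C' * R :=
    (hKR x hx).trans (le_mul_of_one_le_left hR.le (hC1.trans (le_max_left _ _)))
  have e1 : |u ε ((A ε).mulVec x) - u ε (B.mulVec x)| ≤ ε ^ (m + 1) := by
    refine (h1 _ _ hBin hAin).trans ?_
    have hp1 : ε⁻¹ ^ p * ε ^ p = 1 := by rw [← mul_pow, inv_mul_cancel₀ hε.ne', one_pow]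
    rw [norm_sub_rev]
    calc _ ≤ ε⁻¹ ^ p * ((n + 1) * R * ε ^ q) := by gcongr
      _ = (n + 1) * R * ε ^ (m + 1 + 1) := by
        simp only [q, pow_add ε (m + 1 + 1) p]
        linear_combination ((n + 1) * R * ε ^ (m + 1 + 1)) * hp1
      _ ≤ _ := h7
  have e2 := h6 (B.mulVec x) (by simpa using hBin)
  have e3 := h6 x (by simpa using hxin)
  rw [hinv ε B (mem_SO_iff.1 hB).1 (mem_SO_iff.1 hB).2 x] at e2
  have h9 : 3 * ε ^ (m + 1) ≤ ε ^ m := h8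
  rw [abs_le] at *
  constructor <;> linarith [e1.1, e1.2, e2.1, e2.2, e3.1, e3.2]

end Main


/-- for a moderate net `(u_ε)` of smooth functions on `ℝ^n` the following
are equivalent: (i) invariance under all generalized rotations; (ii) the infinitesimal
rotational derivatives `x_i ∂_j u - x_j ∂_i u` are negligible; (iii) `u` has a
representative consisting of rotationally invariant functions. -/
theorem stmt12 {n : ℕ}
    (u : ℝ → (Fin n → ℝ) → ℝ)
    (hus : ∀ ε ∈ Set.Ioc (0:ℝ) 1, ContDiff ℝ (⊤ : ℕ∞) (u ε))
    (humod : ModerateF u) :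
    ((∀ A : ℝ → Matrix (Fin n) (Fin n) ℝ, GenRotation A →
        NegligibleF (fun ε x => u ε ((A ε).mulVec x) - u ε x)) ↔
      (∀ i j : Fin n, i < j →
        NegligibleF (fun ε x => x i * fderiv ℝ (u ε) x (Pi.single j (1:ℝ)) -
          x j * fderiv ℝ (u ε) x (Pi.single i (1:ℝ))))) ∧
    ((∀ i j : Fin n, i < j →
        NegligibleF (fun ε x => x i * fderiv ℝ (u ε) x (Pi.single j (1:ℝ)) -
          x j * fderiv ℝ (u ε) x (Pi.single i (1:ℝ)))) ↔
      (∃ u' : ℝ → (Fin n → ℝ) → ℝ,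
        (∀ ε : ℝ, ContDiff ℝ (⊤ : ℕ∞) (u' ε)) ∧
        (∀ (ε : ℝ) (A : Matrix (Fin n) (Fin n) ℝ), Aᵀ * A = 1 → A.det = 1 →
          ∀ x : Fin n → ℝ, u' ε (A.mulVec x) = u' ε x) ∧
        NegligibleF (fun ε x => u ε x - u' ε x))) := by
  have hev : EvSmooth u := ev_Ioc.mono hus
  have h12 : (∀ A : ℝ → Matrix (Fin n) (Fin n) ℝ, GenRotation A →
      NegligibleF (fun ε x => u ε ((A ε).mulVec x) - u ε x)) →
      ∀ i j : Fin n, i < j → NegligibleF (fun ε => rotD i j (u ε)) :=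
    fun h i j hij => rotD_negligible hev humod h hij.ne
  have h23 := exists_invariant hus humod
  refine ⟨⟨h12, fun h => ?_⟩, ⟨h23, ?_⟩⟩
  · obtain ⟨u', -, hinv, hneg⟩ := h23 h
    exact fun A hA => invariant_of_representative hev humod hinv hneg hA
  · rintro ⟨u', -, hinv, hneg⟩
    exact h12 fun A hA => invariant_of_representative hev humod hinv hneg hA
end
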